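/- arXiv:1401.6905 — 3 statements merged into one kernel-verified Lean document; each statement's English description precedes it below -/
import Mathlib

section
/- Let c_r > 0 and ε ∈ (0, c_r), and set λ := c_r − ε > 0. Suppose there exist S, C, ρ > 0 such that for every t ≥ S: P(sup_{s ≥ t} |s^{-1} α_s − c_r| > ε) ≤ C e^{−ρ t}. Define w := sup over bounded stopping times τ of E[∫₀^τ e^{−α_s} f(X_s) ds + e^{−α_τ} g(X_τ)], and for T > 0, w_T := sup over stopping times τ with τ ≤ T a.s. of the same expression. Then w is finite, and for every T ≥ S: 0 ≤ w − w_T ≤ ‖f‖ (C e^{−ρT}/(1 − e^{−ρ}) + e^{−λT}/(1 − e^{−λ})) + 2‖g‖ (C e^{−ρT} + e^{−λT}). In particular w_T → w exponentially fast as T → ∞. -/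
open MeasureTheory Filter Set
open scoped ENNReal Topology

lemma aux_joint {Ω : Type*} {m0 : MeasurableSpace Ω}
    (𝓕 : Filtration ℝ m0)
    {E : Type*} [MetricSpace E] [MeasurableSpace E] [BorelSpace E]
    (X : ℝ → Ω → E) (hX : ProgMeasurable 𝓕 X) :
    Measurable (fun p : ℝ × Ω => X p.1 p.2) := by
  have h : ∀ n : ℕ, Measurable (fun p : ℝ × Ω => X (min p.1 n) p.2) := by
    intro n
    have h1 := ((hX (n:ℝ)).mono
      (sup_le_sup le_rfl (MeasurableSpace.comap_mono (𝓕.le n)))).measurable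
    have h2 : Measurable (fun p : ℝ × Ω => ((⟨min p.1 n, mem_Iic.2 (min_le_right _ _)⟩ : Set.Iic (n:ℝ)), p.2)) := by
      refine Measurable.prodMk (Measurable.subtype_mk ?_) measurable_snd
      fun_prop
    exact h1.comp h2
  refine measurable_of_tendsto_metrizable h ?_
  rw [tendsto_pi_nhds]
  intro p
  refine tendsto_const_nhds.congr' ?_
  obtain ⟨N, hN⟩ := exists_nat_ge p.1
  filter_upwards [eventually_ge_atTop N] with n hn
  have : p.1 ≤ n := hN.trans (by exact_mod_cast hn)
  simp [min_eq_left this]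

/-- the payoff -/
noncomputable def Jpay {Ω E : Type*} (X : ℝ → Ω → E) (f g r : E → ℝ) (t : ℝ) (ω : Ω) : ℝ :=
  (∫ s in (0:ℝ)..t, Real.exp (-(∫ u in (0:ℝ)..s, r (X u ω))) * f (X s ω))
    + Real.exp (-(∫ u in (0:ℝ)..t, r (X u ω))) * g (X t ω)

section
variable {Ω : Type*} {m0 : MeasurableSpace Ω} {E : Type*} [MetricSpace E] [MeasurableSpace E]
    [BorelSpace E]

lemma aux_bdd_int {h : ℝ → ℝ} (hm : Measurable h) {K : ℝ} (hb : ∀ u, 0 ≤ u → |h u| ≤ K)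
    {a b : ℝ} (ha : 0 ≤ a) (hb0 : 0 ≤ b) :
    IntervalIntegrable h volume a b := by
  rw [intervalIntegrable_iff]
  refine Measure.integrableOn_of_bounded (M := K) ?_ hm.aestronglyMeasurable ?_
  · simp
  · refine (ae_restrict_iff' measurableSet_uIoc).2 (ae_of_all _ ?_)
    intro x hx
    exact hb x (le_of_lt (lt_of_le_of_lt (le_min ha hb0) hx.1))

lemma aux_alpha_cont {h : ℝ → ℝ} (hm : Measurable h) {K : ℝ} (hb : ∀ u, |h u| ≤ K) :
    Continuous (fun s => ∫ u in (0:ℝ)..s, h u) := by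
  refine intervalIntegral.continuous_primitive ?_ 0
  intro a b
  rw [intervalIntegrable_iff]
  refine Measure.integrableOn_of_bounded (M := K) (by simp) hm.aestronglyMeasurable ?_
  exact ae_of_all _ (fun x => hb x)

lemma aux_int_meas {Z : Type*} [MeasurableSpace Z] {G : ℝ × Z → ℝ} (hG : Measurable G)
    {τ : Z → ℝ} (hτ : Measurable τ) (h0 : ∀ z, 0 ≤ τ z) :
    Measurable (fun z => ∫ s in (0:ℝ)..(τ z), G (s, z)) := by
  have h1 : (fun z => ∫ s in (0:ℝ)..(τ z), G (s, z))
      = fun z => ∫ s, (({p : Z × ℝ | 0 < p.2 ∧ p.2 ≤ τ p.1}).indicator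
          (fun p : Z × ℝ => G (p.2, p.1))) (z, s) := by
    funext z
    rw [intervalIntegral.integral_of_le (h0 z), ← integral_indicator measurableSet_Ioc]
    rfl
  rw [h1]
  have hms : MeasurableSet {p : Z × ℝ | 0 < p.2 ∧ p.2 ≤ τ p.1} :=
    (measurableSet_lt measurable_const measurable_snd).inter
      (measurableSet_le measurable_snd (hτ.comp measurable_fst))
  have hm : Measurable (fun p : Z × ℝ => G (p.2, p.1)) :=
    hG.comp (measurable_snd.prodMk measurable_fst)
  exact ((hm.indicator hms).stronglyMeasurable.integral_prod_right').measurable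

lemma aux_alpha_meas {X : ℝ → Ω → E} (hXm : Measurable (fun p : ℝ × Ω => X p.1 p.2))
    {r : E → ℝ} (hr : Measurable r) :
    Measurable (fun p : ℝ × Ω => ∫ u in (0:ℝ)..(max p.1 0), r (X u p.2)) := by
  refine aux_int_meas (G := fun q : ℝ × (ℝ × Ω) => r (X q.1 q.2.2)) ?_ ?_ ?_
  · exact hr.comp (hXm.comp (measurable_fst.prodMk (measurable_snd.comp measurable_snd)))
  · fun_prop
  · intro z; exact le_max_right _ _

lemma aux_J_meas {X : ℝ → Ω → E} (hXm : Measurable (fun p : ℝ × Ω => X p.1 p.2))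
    {f g r : E → ℝ} (hf : Measurable f) (hg : Measurable g) (hr : Measurable r)
    {τ : Ω → ℝ} (hτ : Measurable τ) (h0 : ∀ z, 0 ≤ τ z) :
    Measurable (fun ω => Jpay X f g r (τ ω) ω) := by
  have hA := aux_alpha_meas hXm hr
  have hA' : Measurable (fun p : ℝ × Ω =>
      Real.exp (-(∫ u in (0:ℝ)..(max p.1 0), r (X u p.2)))) := by fun_prop
  unfold Jpay
  refine Measurable.add ?_ (Measurable.mul ?_ ?_)
  · have := aux_int_meas (hA'.mul (hf.comp hXm)) hτ h0
    convert this using 2 with ω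
    refine intervalIntegral.integral_congr ?_
    intro s hs
    rw [uIcc_of_le (h0 ω)] at hs
    simp [max_eq_left hs.1]
  · have := hA'.comp (hτ.prodMk measurable_id)
    convert this using 2 with ω
    simp [max_eq_left (h0 ω)]
  · exact hg.comp (hXm.comp (hτ.prodMk measurable_id))

lemma aux_alpha_nonneg {X : ℝ → Ω → E} {r : E → ℝ} (hr0 : ∀ x, 0 ≤ r x) {s : ℝ} (hs : 0 ≤ s)
    (ω : Ω) : 0 ≤ ∫ u in (0:ℝ)..s, r (X u ω) :=
  intervalIntegral.integral_nonneg hs (fun _ _ => hr0 _)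

lemma aux_exp_le {X : ℝ → Ω → E} {r : E → ℝ} (hr0 : ∀ x, 0 ≤ r x) {s : ℝ} (hs : 0 ≤ s)
    (ω : Ω) : Real.exp (-∫ u in (0:ℝ)..s, r (X u ω)) ≤ 1 := by
  rw [Real.exp_le_one_iff]
  linarith [aux_alpha_nonneg (X := X) hr0 hs ω]

lemma aux_J_bdd {X : ℝ → Ω → E} {f g r : E → ℝ} {Cf Cg : ℝ} (hfb : ∀ x, |f x| ≤ Cf)
    (hgb : ∀ x, |g x| ≤ Cg) (hr0 : ∀ x, 0 ≤ r x) {t T : ℝ} (ht : 0 ≤ t) (htT : t ≤ T) (ω : Ω) :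
    |Jpay X f g r t ω| ≤ Cf * T + Cg := by
  have hCf : 0 ≤ Cf := (abs_nonneg _).trans (hfb (X 0 ω))
  have key : ∀ (h : E → ℝ) (K : ℝ), (∀ x, |h x| ≤ K) → ∀ s, 0 ≤ s →
      |Real.exp (-(∫ u in (0:ℝ)..s, r (X u ω))) * h (X s ω)| ≤ K := by
    intro h K hK s hs
    rw [abs_mul, abs_of_pos (Real.exp_pos _)]
    exact (mul_le_of_le_one_left (abs_nonneg _) (aux_exp_le hr0 hs ω)).trans (hK _)
  unfold Jpay
  refine (abs_add_le _ _).trans (add_le_add ?_ (key g Cg hgb t ht))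
  have := intervalIntegral.norm_integral_le_of_norm_le_const (a := 0) (b := t) (C := Cf)
    (f := fun s => Real.exp (-(∫ u in (0:ℝ)..s, r (X u ω))) * f (X s ω)) (by
      intro s hs
      rw [uIoc_of_le ht] at hs
      exact key f Cf hfb s hs.1.le)
  rw [Real.norm_eq_abs, sub_zero, abs_of_nonneg ht] at this
  exact this.trans (by gcongr)

lemma aux_path {X : ℝ → Ω → E} (hXm : Measurable (fun p : ℝ × Ω => X p.1 p.2))
    {f g r : E → ℝ} (hf : Measurable f) (hr : Measurable r)
    {Cf Cg Cr : ℝ} (hfb : ∀ x, |f x| ≤ Cf)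
    (hgb : ∀ x, |g x| ≤ Cg) (hrb : ∀ x, |r x| ≤ Cr) (hr0 : ∀ x, 0 ≤ r x) {t T T1 : ℝ} (ht : 0 ≤ t)
    (hT : 0 ≤ T) (hTT : T ≤ T1) (htT : t ≤ T1) (ω : Ω) :
    Jpay X f g r t ω - Jpay X f g r (min t T) ω ≤
      Cf * (∫ s in T..T1, Real.exp (-(∫ u in (0:ℝ)..s, r (X u ω))))
        + 2 * Cg * Real.exp (-(∫ u in (0:ℝ)..T, r (X u ω))) := by
  have hCf : 0 ≤ Cf := (abs_nonneg _).trans (hfb (X 0 ω))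
  have hCg : 0 ≤ Cg := (abs_nonneg _).trans (hgb (X 0 ω))
  have hXω : Measurable (fun s => X s ω) := hXm.comp (measurable_id.prodMk measurable_const)
  have hAc : Continuous (fun s => ∫ u in (0:ℝ)..s, r (X u ω)) :=
    aux_alpha_cont (hr.comp hXω) (fun u => hrb _)
  have hec : Continuous (fun s => Real.exp (-∫ u in (0:ℝ)..s, r (X u ω))) := by fun_prop
  have hei : ∀ a b : ℝ, IntervalIntegrable
      (fun s => Real.exp (-∫ u in (0:ℝ)..s, r (X u ω))) volume a b :=
    fun a b => hec.intervalIntegrable a b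
  have hfi : ∀ a b : ℝ, 0 ≤ a → 0 ≤ b → IntervalIntegrable
      (fun s => Real.exp (-∫ u in (0:ℝ)..s, r (X u ω)) * f (X s ω)) volume a b := by
    intro a b ha hb
    refine aux_bdd_int (K := Cf) (hec.measurable.mul (hf.comp hXω)) ?_ ha hb
    intro s hs
    rw [Pi.mul_apply, abs_mul, abs_of_pos (Real.exp_pos _)]
    exact (mul_le_of_le_one_left (abs_nonneg _) (aux_exp_le hr0 hs ω)).trans (hfb _)
  rcases le_total t T with h | h
  · rw [min_eq_left h, sub_self]
    have : 0 ≤ ∫ s in T..T1, Real.exp (-(∫ u in (0:ℝ)..s, r (X u ω))) :=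
      intervalIntegral.integral_nonneg hTT (fun _ _ => (Real.exp_pos _).le)
    positivity
  · rw [min_eq_right h]
    unfold Jpay
    have e1 := intervalIntegral.integral_interval_sub_left (hfi 0 t le_rfl ht) (hfi 0 T le_rfl hT)
    have e2 : ∫ s in T..t, Real.exp (-∫ u in (0:ℝ)..s, r (X u ω)) * f (X s ω)
        ≤ ∫ s in T..t, Cf * Real.exp (-∫ u in (0:ℝ)..s, r (X u ω)) := by
      refine intervalIntegral.integral_mono_on h (hfi _ _ hT ht) ((hei _ _).const_mul _) ?_
      intro s _
      rw [mul_comm]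
      exact mul_le_mul_of_nonneg_right ((le_abs_self _).trans (hfb _)) (Real.exp_pos _).le
    have e3 : ∫ s in T..t, Real.exp (-∫ u in (0:ℝ)..s, r (X u ω))
        ≤ ∫ s in T..T1, Real.exp (-∫ u in (0:ℝ)..s, r (X u ω)) := by
      refine intervalIntegral.integral_mono_interval le_rfl h htT
        (ae_of_all _ fun _ => (Real.exp_pos _).le) (hei _ _)
    rw [intervalIntegral.integral_const_mul] at e2
    have e3' := mul_le_mul_of_nonneg_left e3 hCf
    have e4 : Real.exp (-∫ u in (0:ℝ)..t, r (X u ω)) ≤ Real.exp (-∫ u in (0:ℝ)..T, r (X u ω)) := by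
      rw [Real.exp_le_exp, neg_le_neg_iff]
      refine intervalIntegral.integral_mono_interval le_rfl hT h (ae_of_all _ fun _ => hr0 _) ?_
      exact aux_bdd_int (hr.comp hXω) (fun u _ => hrb _) le_rfl ht
    have e5 : Real.exp (-∫ u in (0:ℝ)..t, r (X u ω)) * g (X t ω)
        ≤ Cg * Real.exp (-∫ u in (0:ℝ)..T, r (X u ω)) := by
      rw [mul_comm]
      refine (mul_le_mul_of_nonneg_right ((le_abs_self _).trans (hgb _)) (Real.exp_pos _).le).trans ?_
      gcongr
    have e6 : -(Real.exp (-∫ u in (0:ℝ)..T, r (X u ω)) * g (X T ω))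
        ≤ Cg * Real.exp (-∫ u in (0:ℝ)..T, r (X u ω)) := by
      rw [mul_comm, ← neg_mul]
      exact mul_le_mul_of_nonneg_right ((neg_le_abs _).trans (hgb _)) (Real.exp_pos _).le
    linarith

lemma aux_exp_expect (P : Measure Ω) [IsProbabilityMeasure P]
    {X : ℝ → Ω → E} (hXm : Measurable (fun p : ℝ × Ω => X p.1 p.2))
    {r : E → ℝ} (hr : Measurable r) (hr0 : ∀ x, 0 ≤ r x)
    {cr ε lam C ρ t : ℝ} (hlam : lam = cr - ε) (ht : 0 < t) (hC : 0 < C)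
    (hdev : P {ω | ∃ s : ℝ, t ≤ s ∧ ε < |s⁻¹ * (∫ u in (0:ℝ)..s, r (X u ω)) - cr|}
        ≤ ENNReal.ofReal (C * Real.exp (-ρ * t))) :
    Integrable (fun ω => Real.exp (-∫ u in (0:ℝ)..t, r (X u ω))) P ∧
    ∫ ω, Real.exp (-∫ u in (0:ℝ)..t, r (X u ω)) ∂P
      ≤ C * Real.exp (-ρ * t) + Real.exp (-lam * t) := by
  have hAm : Measurable (fun ω => ∫ u in (0:ℝ)..t, r (X u ω)) :=
    aux_int_meas (G := fun q : ℝ × Ω => r (X q.1 q.2)) (hr.comp hXm) measurable_const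
      (fun _ => ht.le)
  have hI : Integrable (fun ω => Real.exp (-∫ u in (0:ℝ)..t, r (X u ω))) P := by
    refine Integrable.of_bound (C := 1) hAm.neg.exp.aestronglyMeasurable (ae_of_all _ fun ω => ?_)
    rw [Real.norm_eq_abs, abs_of_pos (Real.exp_pos _)]
    exact aux_exp_le hr0 ht.le ω
  refine ⟨hI, ?_⟩
  set B : Set Ω := {ω | ∫ u in (0:ℝ)..t, r (X u ω) < lam * t} with hB
  have hBm : MeasurableSet B := measurableSet_lt hAm measurable_const
  have hsub : B ⊆ {ω | ∃ s : ℝ, t ≤ s ∧ ε < |s⁻¹ * (∫ u in (0:ℝ)..s, r (X u ω)) - cr|} := by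
    intro ω hω
    refine ⟨t, le_rfl, ?_⟩
    have h1 : t⁻¹ * (∫ u in (0:ℝ)..t, r (X u ω)) < lam := by
      rw [inv_mul_lt_iff₀ ht, mul_comm]; exact hω
    rw [abs_sub_comm]
    refine lt_of_lt_of_le ?_ (le_abs_self _)
    linarith
  have hPB : P.real B ≤ C * Real.exp (-ρ * t) :=
    ENNReal.toReal_le_of_le_ofReal (by positivity) ((measure_mono hsub).trans hdev)
  have hle : ∀ ω, Real.exp (-∫ u in (0:ℝ)..t, r (X u ω))
      ≤ B.indicator (fun _ => (1:ℝ)) ω + Real.exp (-lam * t) := by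
    intro ω
    by_cases h : ω ∈ B
    · rw [indicator_of_mem h]
      linarith [aux_exp_le (X := X) hr0 ht.le ω, Real.exp_pos (-lam * t)]
    · rw [indicator_of_notMem h, zero_add, Real.exp_le_exp]
      have : ¬ (∫ u in (0:ℝ)..t, r (X u ω) < lam * t) := h
      linarith
  have hBi : Integrable (B.indicator (fun _ => (1:ℝ))) P := (integrable_const _).indicator hBm
  calc _ ≤ ∫ ω, (B.indicator (fun _ => (1:ℝ)) ω + Real.exp (-lam * t)) ∂P :=
        integral_mono hI (hBi.add (integrable_const _)) hle
    _ = P.real B + Real.exp (-lam * t) := by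
        rw [integral_add hBi (integrable_const _), integral_indicator_const _ hBm]; simp
    _ ≤ _ := by linarith

lemma aux_exp_tail {k T T1 : ℝ} (hk : 0 < k) :
    ∫ s in T..T1, Real.exp (-k * s) ≤ Real.exp (-k * T) / (1 - Real.exp (-k)) := by
  rw [intervalIntegral.integral_comp_mul_left (fun x => Real.exp x) (neg_ne_zero.2 hk.ne'), integral_exp]
  have h1 : 0 < 1 - Real.exp (-k) := by
    have : Real.exp (-k) < 1 := by rw [Real.exp_lt_one_iff]; linarith
    linarith
  have h2 : 1 - Real.exp (-k) ≤ k := by linarith [Real.add_one_le_exp (-k)]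
  have h3 : Real.exp (-k * T) / k ≤ Real.exp (-k * T) / (1 - Real.exp (-k)) := by gcongr
  refine le_trans ?_ h3
  rw [smul_eq_mul, inv_neg, neg_mul, ← mul_neg, neg_sub, div_eq_inv_mul]
  gcongr
  linarith [Real.exp_pos (-k * T1)]

lemma aux_key (P : Measure Ω) [IsProbabilityMeasure P]
    {X : ℝ → Ω → E} (hXm : Measurable (fun p : ℝ × Ω => X p.1 p.2))
    {f g r : E → ℝ} (hf : Measurable f) (hg : Measurable g) (hr : Measurable r)
    {Cf Cg Cr : ℝ} (hfb : ∀ x, |f x| ≤ Cf)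
    (hgb : ∀ x, |g x| ≤ Cg) (hrb : ∀ x, |r x| ≤ Cr) (hr0 : ∀ x, 0 ≤ r x)
    {cr ε lam S C ρ T T0 : ℝ} (hlam : lam = cr - ε) (hl : 0 < lam) (hS : 0 < S) (hC : 0 < C)
    (hρ : 0 < ρ)
    (hdev : ∀ t : ℝ, S ≤ t →
      P {ω | ∃ s : ℝ, t ≤ s ∧ ε < |s⁻¹ * (∫ u in (0:ℝ)..s, r (X u ω)) - cr|}
        ≤ ENNReal.ofReal (C * Real.exp (-ρ * t))) (hT : S ≤ T)
    {τ : Ω → ℝ} (hτ : Measurable τ) (h0 : ∀ z, 0 ≤ τ z) (hb : ∀ z, τ z ≤ T0) :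
    ∫ ω, Jpay X f g r (τ ω) ω ∂P ≤ ∫ ω, Jpay X f g r (min (τ ω) T) ω ∂P +
      (Cf * (C * Real.exp (-ρ * T) / (1 - Real.exp (-ρ))
              + Real.exp (-lam * T) / (1 - Real.exp (-lam)))
          + 2 * Cg * (C * Real.exp (-ρ * T) + Real.exp (-lam * T))) := by
  have hT0 : 0 < T := hS.trans_le hT
  obtain ⟨ω0⟩ : Nonempty Ω := P.nonempty_of_neZero
  have hCf : 0 ≤ Cf := (abs_nonneg _).trans (hfb (X 0 ω0))
  have hCg : 0 ≤ Cg := (abs_nonneg _).trans (hgb (X 0 ω0))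
  set T1 := max T0 T with hT1
  have hTT : T ≤ T1 := le_max_right _ _
  have i1 : Integrable (fun ω => Jpay X f g r (τ ω) ω) P :=
    Integrable.of_bound (C := Cf * T0 + Cg) (aux_J_meas hXm hf hg hr hτ h0).aestronglyMeasurable
      (ae_of_all _ fun ω => aux_J_bdd hfb hgb hr0 (h0 ω) (hb ω) ω)
  have h0' : ∀ ω, 0 ≤ min (τ ω) T := fun ω => le_min (h0 ω) hT0.le
  have i2 : Integrable (fun ω => Jpay X f g r (min (τ ω) T) ω) P :=
    Integrable.of_bound (C := Cf * T + Cg)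
      (aux_J_meas hXm hf hg hr (hτ.min measurable_const) h0').aestronglyMeasurable
      (ae_of_all _ fun ω => aux_J_bdd hfb hgb hr0 (h0' ω) (min_le_right _ _) ω)
  obtain ⟨i3, b3⟩ := aux_exp_expect P hXm hr hr0 hlam hT0 hC (hdev T hT)
  -- Fubini
  have hprod : Integrable (fun p : ℝ × Ω => Real.exp (-∫ u in (0:ℝ)..p.1, r (X u p.2)))
      ((volume.restrict (Ioc T T1)).prod P) := by
    have hm : Measurable (fun p : ℝ × Ω =>
      Real.exp (-(∫ u in (0:ℝ)..(max p.1 0), r (X u p.2)))) := by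
      have := aux_alpha_meas hXm hr
      fun_prop
    have hi : Integrable (fun p : ℝ × Ω =>
      Real.exp (-(∫ u in (0:ℝ)..(max p.1 0), r (X u p.2))))
      ((volume.restrict (Ioc T T1)).prod P) := by
      refine Integrable.of_bound (C := 1) hm.aestronglyMeasurable (ae_of_all _ fun p => ?_)
      rw [Real.norm_eq_abs, abs_of_pos (Real.exp_pos _)]
      exact aux_exp_le hr0 (le_max_right _ _) p.2
    refine hi.congr ?_
    have hae : ∀ᵐ s ∂(volume.restrict (Ioc T T1)), s ∈ Ioc T T1 := ae_restrict_mem measurableSet_Ioc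
    have := (Measure.quasiMeasurePreserving_fst (μ := volume.restrict (Ioc T T1)) (ν := P)).ae hae
    filter_upwards [this] with p hp
    rw [max_eq_left (hT0.le.trans hp.1.le)]
  have hswap : ∫ ω, (∫ s in T..T1, Real.exp (-∫ u in (0:ℝ)..s, r (X u ω))) ∂P
      = ∫ s in T..T1, (∫ ω, Real.exp (-∫ u in (0:ℝ)..s, r (X u ω)) ∂P) := by
    simp_rw [intervalIntegral.integral_of_le hTT]
    rw [integral_integral_swap]
    exact hprod.swap
  have i4 : Integrable (fun ω => ∫ s in T..T1, Real.exp (-∫ u in (0:ℝ)..s, r (X u ω))) P := by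
    simp_rw [intervalIntegral.integral_of_le hTT]
    exact hprod.integral_prod_right
  have b4 : ∫ ω, (∫ s in T..T1, Real.exp (-∫ u in (0:ℝ)..s, r (X u ω))) ∂P
      ≤ C * Real.exp (-ρ * T) / (1 - Real.exp (-ρ))
              + Real.exp (-lam * T) / (1 - Real.exp (-lam)) := by
    rw [hswap]
    have c1 : Continuous fun s : ℝ => C * Real.exp (-ρ * s) := by fun_prop
    have c2 : Continuous fun s : ℝ => Real.exp (-lam * s) := by fun_prop
    calc _ ≤ ∫ s in T..T1, (C * Real.exp (-ρ * s) + Real.exp (-lam * s)) := by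
          refine intervalIntegral.integral_mono_on hTT ?_ ((c1.add c2).intervalIntegrable _ _) ?_
          · rw [intervalIntegrable_iff_integrableOn_Ioc_of_le hTT]
            exact hprod.integral_prod_left
          · intro s hs
            exact (aux_exp_expect P hXm hr hr0 hlam (hT0.trans_le hs.1) hC
              (hdev s (hT.trans hs.1))).2
      _ = C * (∫ s in T..T1, Real.exp (-ρ * s)) + ∫ s in T..T1, Real.exp (-lam * s) := by
          rw [intervalIntegral.integral_add (c1.intervalIntegrable _ _)
            (c2.intervalIntegrable _ _), intervalIntegral.integral_const_mul]
      _ ≤ _ := by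
          rw [mul_div_assoc]
          exact add_le_add (mul_le_mul_of_nonneg_left (aux_exp_tail hρ) hC.le) (aux_exp_tail hl)
  have hmono : ∫ ω, (Jpay X f g r (τ ω) ω - Jpay X f g r (min (τ ω) T) ω) ∂P ≤
      ∫ ω, (Cf * (∫ s in T..T1, Real.exp (-(∫ u in (0:ℝ)..s, r (X u ω))))
        + 2 * Cg * Real.exp (-(∫ u in (0:ℝ)..T, r (X u ω)))) ∂P :=
    integral_mono (i1.sub i2) ((i4.const_mul _).add (i3.const_mul _)) fun ω =>
      aux_path hXm hf hr hfb hgb hrb hr0 (h0 ω) hT0.le hTT ((hb ω).trans (le_max_left _ _)) ω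
  rw [integral_sub i1 i2, integral_add (i4.const_mul _) (i3.const_mul _), integral_const_mul,
    integral_const_mul] at hmono
  have := mul_le_mul_of_nonneg_left b4 hCf
  have := mul_le_mul_of_nonneg_left b3 (by positivity : 0 ≤ 2 * Cg)
  linarith

lemma aux_stop_meas {𝓕 : Filtration ℝ m0} {τ : Ω → ℝ}
    (hτ : IsStoppingTime 𝓕 (fun ω => (τ ω : WithTop ℝ))) : Measurable τ := by
  refine measurable_of_Iic fun i => ?_
  have := 𝓕.le i _ (hτ i)
  simpa [preimage, Iic] using this

lemma aux_stop_min {𝓕 : Filtration ℝ m0} {τ : Ω → ℝ}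
    (hτ : IsStoppingTime 𝓕 (fun ω => (τ ω : WithTop ℝ))) (T : ℝ) :
    IsStoppingTime 𝓕 (fun ω => ((min (τ ω) T : ℝ) : WithTop ℝ)) := by
  have := hτ.min_const T
  simpa [WithTop.coe_min] using this

end

/-- dichotomy of discounting, the case `μ(r) = c_r > 0`. Under an
exponential bound on the deviations of `t⁻¹ α_t` from `c_r`, the value `w` over bounded
stopping times is finite and is approximated exponentially fast by the finite-horizon
values `w_T`. -/
theorem stmt17
    {Ω : Type*} {m0 : MeasurableSpace Ω} (P : Measure Ω) [IsProbabilityMeasure P]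
    (𝓕 : Filtration ℝ m0)
    {E : Type*} [MetricSpace E] [MeasurableSpace E] [BorelSpace E]
    (X : ℝ → Ω → E) (hX : ProgMeasurable 𝓕 X)
    (f g : E → ℝ) (hf : Measurable f) (hg : Measurable g)
    (Cf Cg : ℝ) (hfb : ∀ x, |f x| ≤ Cf) (hgb : ∀ x, |g x| ≤ Cg)
    (r : E → ℝ) (hr : Measurable r) (Cr : ℝ) (hrb : ∀ x, |r x| ≤ Cr)
    (hr0 : ∀ x, 0 ≤ r x)
    (cr ε : ℝ) (hcr : 0 < cr) (hε0 : 0 < ε) (hεcr : ε < cr)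
    (lam : ℝ) (hlam : lam = cr - ε)
    (S C ρ : ℝ) (hS : 0 < S) (hC : 0 < C) (hρ : 0 < ρ)
    (hdev : ∀ t : ℝ, S ≤ t →
      P {ω | ∃ s : ℝ, t ≤ s ∧ ε < |s⁻¹ * (∫ u in (0:ℝ)..s, r (X u ω)) - cr|}
        ≤ ENNReal.ofReal (C * Real.exp (-ρ * t))) :
    BddAbove {v : ℝ | ∃ τ : Ω → ℝ, IsStoppingTime 𝓕 (fun ω => (τ ω : WithTop ℝ)) ∧ (∀ ω, 0 ≤ τ ω) ∧
        (∃ T₀ : ℝ, ∀ ω, τ ω ≤ T₀) ∧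
        v = ∫ ω, ((∫ s in (0:ℝ)..(τ ω),
              Real.exp (-(∫ u in (0:ℝ)..s, r (X u ω))) * f (X s ω))
            + Real.exp (-(∫ u in (0:ℝ)..(τ ω), r (X u ω))) * g (X (τ ω) ω)) ∂P} ∧
    ∀ T : ℝ, S ≤ T →
      0 ≤ sSup {v : ℝ | ∃ τ : Ω → ℝ, IsStoppingTime 𝓕 (fun ω => (τ ω : WithTop ℝ)) ∧ (∀ ω, 0 ≤ τ ω) ∧
            (∃ T₀ : ℝ, ∀ ω, τ ω ≤ T₀) ∧
            v = ∫ ω, ((∫ s in (0:ℝ)..(τ ω),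
                  Real.exp (-(∫ u in (0:ℝ)..s, r (X u ω))) * f (X s ω))
                + Real.exp (-(∫ u in (0:ℝ)..(τ ω), r (X u ω))) * g (X (τ ω) ω)) ∂P}
          - sSup {v : ℝ | ∃ τ : Ω → ℝ, IsStoppingTime 𝓕 (fun ω => (τ ω : WithTop ℝ)) ∧ (∀ ω, 0 ≤ τ ω) ∧
            (∀ᵐ ω ∂P, τ ω ≤ T) ∧
            v = ∫ ω, ((∫ s in (0:ℝ)..(τ ω),
                  Real.exp (-(∫ u in (0:ℝ)..s, r (X u ω))) * f (X s ω))
                + Real.exp (-(∫ u in (0:ℝ)..(τ ω), r (X u ω))) * g (X (τ ω) ω)) ∂P} ∧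
      sSup {v : ℝ | ∃ τ : Ω → ℝ, IsStoppingTime 𝓕 (fun ω => (τ ω : WithTop ℝ)) ∧ (∀ ω, 0 ≤ τ ω) ∧
            (∃ T₀ : ℝ, ∀ ω, τ ω ≤ T₀) ∧
            v = ∫ ω, ((∫ s in (0:ℝ)..(τ ω),
                  Real.exp (-(∫ u in (0:ℝ)..s, r (X u ω))) * f (X s ω))
                + Real.exp (-(∫ u in (0:ℝ)..(τ ω), r (X u ω))) * g (X (τ ω) ω)) ∂P}
          - sSup {v : ℝ | ∃ τ : Ω → ℝ, IsStoppingTime 𝓕 (fun ω => (τ ω : WithTop ℝ)) ∧ (∀ ω, 0 ≤ τ ω) ∧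
            (∀ᵐ ω ∂P, τ ω ≤ T) ∧
            v = ∫ ω, ((∫ s in (0:ℝ)..(τ ω),
                  Real.exp (-(∫ u in (0:ℝ)..s, r (X u ω))) * f (X s ω))
                + Real.exp (-(∫ u in (0:ℝ)..(τ ω), r (X u ω))) * g (X (τ ω) ω)) ∂P}
        ≤ Cf * (C * Real.exp (-ρ * T) / (1 - Real.exp (-ρ))
              + Real.exp (-lam * T) / (1 - Real.exp (-lam)))
          + 2 * Cg * (C * Real.exp (-ρ * T) + Real.exp (-lam * T)) := by
  have hXm := aux_joint 𝓕 X hX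
  have hl : 0 < lam := by linarith
  obtain ⟨ω0⟩ : Nonempty Ω := P.nonempty_of_neZero
  have hcoe : ∀ τ : Ω → ℝ, ∫ ω, ((∫ s in (0:ℝ)..(τ ω),
              Real.exp (-(∫ u in (0:ℝ)..s, r (X u ω))) * f (X s ω))
            + Real.exp (-(∫ u in (0:ℝ)..(τ ω), r (X u ω))) * g (X (τ ω) ω)) ∂P
      = ∫ ω, Jpay X f g r (τ ω) ω ∂P := fun τ => rfl
  simp only [hcoe]
  have hbd : ∀ τ : Ω → ℝ, ∀ T, (∀ ω, 0 ≤ τ ω) → (∀ ω, τ ω ≤ T) →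
      ∫ ω, Jpay X f g r (τ ω) ω ∂P ≤ Cf * T + Cg := by
    intro τ T h0 hT
    have := norm_integral_le_of_norm_le_const (μ := P) (C := Cf * T + Cg)
      (f := fun ω => Jpay X f g r (τ ω) ω)
      (ae_of_all _ fun ω => aux_J_bdd hfb hgb hr0 (h0 ω) (hT ω) ω)
    simp only [probReal_univ, mul_one] at this
    exact (le_abs_self _).trans this
  have hB : BddAbove {v : ℝ | ∃ τ : Ω → ℝ, IsStoppingTime 𝓕 (fun ω => (τ ω : WithTop ℝ)) ∧
      (∀ ω, 0 ≤ τ ω) ∧ (∃ T₀ : ℝ, ∀ ω, τ ω ≤ T₀) ∧ v = ∫ ω, Jpay X f g r (τ ω) ω ∂P} := by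
    refine ⟨Cf * S + Cg + (Cf * (C * Real.exp (-ρ * S) / (1 - Real.exp (-ρ))
              + Real.exp (-lam * S) / (1 - Real.exp (-lam)))
          + 2 * Cg * (C * Real.exp (-ρ * S) + Real.exp (-lam * S))), ?_⟩
    rintro v ⟨τ, hτ, h0, ⟨T0, hT0⟩, rfl⟩
    refine (aux_key P hXm hf hg hr hfb hgb hrb hr0 hlam hl hS hC hρ hdev le_rfl
      (aux_stop_meas hτ) h0 hT0).trans ?_
    gcongr
    exact hbd (fun ω => min (τ ω) S) S (fun ω => le_min (h0 ω) hS.le) (fun ω => min_le_right _ _)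
  refine ⟨hB, fun T hT => ?_⟩
  have hT0 : 0 < T := hS.trans_le hT
  have hsub : {v : ℝ | ∃ τ : Ω → ℝ, IsStoppingTime 𝓕 (fun ω => (τ ω : WithTop ℝ)) ∧
      (∀ ω, 0 ≤ τ ω) ∧ (∀ᵐ ω ∂P, τ ω ≤ T) ∧ v = ∫ ω, Jpay X f g r (τ ω) ω ∂P} ⊆
      {v : ℝ | ∃ τ : Ω → ℝ, IsStoppingTime 𝓕 (fun ω => (τ ω : WithTop ℝ)) ∧
      (∀ ω, 0 ≤ τ ω) ∧ (∃ T₀ : ℝ, ∀ ω, τ ω ≤ T₀) ∧ v = ∫ ω, Jpay X f g r (τ ω) ω ∂P} := by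
    rintro v ⟨τ, hτ, h0, hle, rfl⟩
    refine ⟨fun ω => min (τ ω) T, aux_stop_min hτ T, fun ω => le_min (h0 ω) hT0.le,
      ⟨T, fun ω => min_le_right _ _⟩, ?_⟩
    refine integral_congr_ae ?_
    filter_upwards [hle] with ω hω
    rw [min_eq_left hω]
  have h0mem : IsStoppingTime 𝓕 (fun _ : Ω => ((0:ℝ) : WithTop ℝ)) := isStoppingTime_const 𝓕 0
  constructor
  · rw [sub_nonneg]
    refine csSup_le_csSup hB ?_ hsub
    exact ⟨_, fun _ => 0, h0mem, fun _ => le_rfl, ae_of_all _ fun _ => hT0.le, rfl⟩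
  · rw [sub_le_iff_le_add]
    refine csSup_le ⟨_, fun _ => 0, h0mem, fun _ => le_rfl, ⟨0, fun _ => le_rfl⟩, rfl⟩ ?_
    rintro v ⟨τ, hτ, h0, ⟨T0, hT0'⟩, rfl⟩
    refine (aux_key P hXm hf hg hr hfb hgb hrb hr0 hlam hl hS hC hρ hdev hT
      (aux_stop_meas hτ) h0 hT0').trans ?_
    rw [add_comm]
    gcongr
    refine le_csSup (hB.mono hsub) ?_
    exact ⟨fun ω => min (τ ω) T, aux_stop_min hτ T, fun ω => le_min (h0 ω) hT0.le,
      ae_of_all _ fun ω => min_le_right _ _, rfl⟩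
end

section
/- Assume c < 0 and that the following discounted large-deviations-type bound holds: for all δ > 0 and ε > 0 there exist N ∈ ℕ and p > 0 such that for every natural number n ≥ N, P(|∫₀^{nδ} e^{−α_s} f(X_s) ds − c ∫₀^{nδ} e^{−α_s} ds| > ε ∫₀^{nδ} e^{−α_s} ds) ≤ e^{−p n δ}. Then there exist d < 0 and a finite constant C̄ such that E[∫₀^{τ∧T} e^{−α_s} (f(X_s) − d) ds] ≤ C̄ for every stopping time τ and every T ≥ 0; moreover d can be taken as c + ε for any 0 < ε < −c. -/
open MeasureTheory Filter Set
open scoped ENNReal Topology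

lemma aux_abs {Ω : Type*} {m0 : MeasurableSpace Ω} (P : Measure Ω) [IsProbabilityMeasure P]
    (W : ℝ → Ω → ℝ) (K : ℝ) (hK : 0 ≤ K)
    (hL : ∀ ω s t, 0 ≤ s → s ≤ t → W t ω ≤ W s ω + K * (t - s))
    (h0 : ∀ ω, W 0 ω = 0) (N : ℕ) (p : ℝ) (hp : 0 < p)
    (hP : ∀ n : ℕ, N ≤ n → P {ω | 0 < W n ω} ≤ ENNReal.ofReal (Real.exp (-p * n))) :
    ∃ C : ℝ, ∀ τ : Ω → ℝ, (∀ ω, 0 ≤ τ ω) → ∫ ω, W (τ ω) ω ∂P ≤ C := by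
  set B : ℕ → Set Ω := fun n => toMeasurable P {ω | 0 < W ((n + N : ℕ) : ℝ) ω} with hB
  set G : Ω → ℝ≥0∞ := fun ω => ENNReal.ofReal (K * (N + 1)) +
    ∑' n : ℕ, (B n).indicator (fun _ => ENNReal.ofReal (K * (n + N : ℕ))) ω with hG
  have hBm : ∀ n, MeasurableSet (B n) := fun n => measurableSet_toMeasurable _ _
  have hGfin : ∫⁻ ω, G ω ∂P ≠ ∞ := by
    have h1 : ∫⁻ ω, G ω ∂P = ENNReal.ofReal (K * (N + 1)) +
        ∑' n : ℕ, ENNReal.ofReal (K * (n + N : ℕ)) * P (B n) := by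
      simp only [hG]
      rw [lintegral_add_left measurable_const, lintegral_tsum]
      · simp [lintegral_indicator_const, hBm]
      · exact fun n => (measurable_const.indicator (hBm n)).aemeasurable
    rw [h1]
    refine ENNReal.add_ne_top.2 ⟨ENNReal.ofReal_ne_top, ?_⟩
    have hs : Summable (fun n : ℕ => K * (((n + N : ℕ) : ℝ) * Real.exp (-p * (n + N : ℕ)))) := by
      have := (Real.summable_pow_mul_exp_neg_nat_mul 1 hp)
      simp only [pow_one] at this
      exact ((summable_nat_add_iff N).2 this).mul_left K
    refine ne_top_of_le_ne_top hs.tsum_ofReal_ne_top (ENNReal.tsum_le_tsum fun n => ?_)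
    rw [← mul_assoc, ENNReal.ofReal_mul (p := K * ((n + N : ℕ) : ℝ)) (by positivity)]
    refine mul_le_mul' le_rfl ?_
    simp only [hB, measure_toMeasurable]
    exact hP _ (Nat.le_add_left _ _)
  refine ⟨(∫⁻ ω, G ω ∂P).toReal, fun τ hτ => ?_⟩
  by_cases hi : Integrable (fun ω => W (τ ω) ω) P
  swap
  · rw [integral_undef hi]; exact ENNReal.toReal_nonneg
  rw [integral_eq_lintegral_pos_part_sub_lintegral_neg_part hi]
  refine (sub_le_self _ ENNReal.toReal_nonneg).trans ?_
  refine ENNReal.toReal_mono hGfin (lintegral_mono fun ω => ?_)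
  set k := ⌊τ ω⌋₊ with hk
  have hk1 : (k : ℝ) ≤ τ ω := Nat.floor_le (hτ ω)
  have hk2 : τ ω < k + 1 := Nat.lt_floor_add_one _
  have e1 := hL ω k (τ ω) (by positivity) hk1
  have e2 := hL ω 0 k le_rfl (by positivity)
  rw [h0] at e2
  have e3 : K * (τ ω - k) ≤ K * 1 := by gcongr; linarith
  simp only [hG]
  rcases lt_or_ge k N with h | h
  · refine le_add_right (ENNReal.ofReal_le_ofReal ?_)
    have : K * (k:ℝ) ≤ K * N := by gcongr
    nlinarith
  · obtain ⟨j, hj⟩ := Nat.exists_eq_add_of_le' h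
    by_cases hw : 0 < W k ω
    · have hm : ω ∈ B j := subset_toMeasurable _ _ (by rw [hj] at hw; exact hw)
      have : ENNReal.ofReal (K * (j + N : ℕ)) ≤
          ∑' n : ℕ, (B n).indicator (fun _ => ENNReal.ofReal (K * (n + N : ℕ))) ω := by
        refine le_trans ?_ (ENNReal.le_tsum j)
        rw [indicator_of_mem hm]
      refine le_trans ?_ (add_le_add le_rfl this)
      rw [← ENNReal.ofReal_add (by positivity) (by positivity), ← hj]
      refine ENNReal.ofReal_le_ofReal ?_
      have : 0 ≤ K * N := by positivity
      nlinarith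
    · refine le_add_right (ENNReal.ofReal_le_ofReal ?_)
      have : 0 ≤ K * N := by positivity
      nlinarith

/-- the discounted large-deviations-type bound (L_r) with `c < 0` implies
the discounted assumption (E1): there exist `d < 0` (indeed `d = c + ε` for any
`0 < ε < −c`) and a finite constant `C̄` with
`E[∫₀^{τ∧T} e^{−α_s}(f(X_s) − d) ds] ≤ C̄` for all stopping times `τ` and `T ≥ 0`. -/
theorem stmt18
    {Ω : Type*} {m0 : MeasurableSpace Ω} (P : Measure Ω) [IsProbabilityMeasure P]
    (𝓕 : Filtration ℝ m0)
    {E : Type*} [MetricSpace E] [MeasurableSpace E] [BorelSpace E]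
    (X : ℝ → Ω → E) (hX : ProgMeasurable 𝓕 X)
    (f : E → ℝ) (hf : Measurable f) (Cf : ℝ) (hfb : ∀ x, |f x| ≤ Cf)
    (r : E → ℝ) (hr : Measurable r) (Cr : ℝ) (hrb : ∀ x, |r x| ≤ Cr)
    (hr0 : ∀ x, 0 ≤ r x)
    (c : ℝ) (hc : c < 0)
    (hLD : ∀ δ : ℝ, 0 < δ → ∀ ε : ℝ, 0 < ε → ∃ N : ℕ, ∃ p : ℝ, 0 < p ∧
      ∀ n : ℕ, N ≤ n →
        P {ω | ε * (∫ s in (0:ℝ)..(↑n * δ), Real.exp (-(∫ u in (0:ℝ)..s, r (X u ω))))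
              < |(∫ s in (0:ℝ)..(↑n * δ),
                    Real.exp (-(∫ u in (0:ℝ)..s, r (X u ω))) * f (X s ω))
                 - c * (∫ s in (0:ℝ)..(↑n * δ),
                    Real.exp (-(∫ u in (0:ℝ)..s, r (X u ω))))|}
          ≤ ENNReal.ofReal (Real.exp (-p * ↑n * δ))) :
    (∃ d : ℝ, d < 0 ∧ ∃ Cbar : ℝ,
      ∀ τ : Ω → ℝ, IsStoppingTime 𝓕 (fun ω => (τ ω : WithTop ℝ)) → (∀ ω, 0 ≤ τ ω) → ∀ T : ℝ, 0 ≤ T →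
        ∫ ω, (∫ s in (0:ℝ)..(min (τ ω) T),
          Real.exp (-(∫ u in (0:ℝ)..s, r (X u ω))) * (f (X s ω) - d)) ∂P ≤ Cbar) ∧
    (∀ ε : ℝ, 0 < ε → ε < -c → ∃ Cbar : ℝ,
      ∀ τ : Ω → ℝ, IsStoppingTime 𝓕 (fun ω => (τ ω : WithTop ℝ)) → (∀ ω, 0 ≤ τ ω) → ∀ T : ℝ, 0 ≤ T →
        ∫ ω, (∫ s in (0:ℝ)..(min (τ ω) T),
          Real.exp (-(∫ u in (0:ℝ)..s, r (X u ω))) * (f (X s ω) - (c + ε))) ∂P ≤ Cbar) := by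
  have hXi : ∀ ω, Measurable (fun s : ℝ => X s ω) := fun ω => by
    have h : ∀ n : ℕ, Measurable (fun s : Iic (n : ℝ) => X s ω) := fun n => by
      have h := ((hX n).mono (sup_le_sup le_rfl
        (MeasurableSpace.comap_mono (𝓕.le n)))).measurable
      exact (h.comp (measurable_prodMk_right (y := ω)))
    intro S hS
    have : (fun s : ℝ => X s ω) ⁻¹' S = ⋃ n : ℕ,
        Subtype.val '' ((fun s : Iic (n : ℝ) => X s ω) ⁻¹' S) := by
      ext s
      simp only [mem_preimage, mem_iUnion, mem_image, Subtype.exists, mem_Iic]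
      constructor
      · intro hs
        obtain ⟨n, hn⟩ := exists_nat_ge s
        exact ⟨n, s, hn, hs, rfl⟩
      · rintro ⟨n, a, ha, h1, rfl⟩; exact h1
    rw [this]
    exact MeasurableSet.iUnion fun n => measurableSet_Iic.subtype_image (h n hS)
  have hII : ∀ (g : ℝ → ℝ) (C : ℝ), Measurable g → (∀ s, |g s| ≤ C) → ∀ a b,
      IntervalIntegrable g volume a b := fun g C hg hC a b =>
    (intervalIntegrable_const (c := C)).mono_fun hg.aestronglyMeasurable
      (Eventually.of_forall fun s => by
        simpa using (hC s).trans (le_abs_self C))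
  set D : Ω → ℝ → ℝ := fun ω s => Real.exp (-(∫ u in (0:ℝ)..s, r (X u ω))) with hD
  have hDm : ∀ ω, Measurable (D ω) := fun ω => by
    have : Continuous fun s => ∫ u in (0:ℝ)..s, r (X u ω) :=
      intervalIntegral.continuous_primitive
        (hII _ Cr (hr.comp (hXi ω)) (fun s => hrb _)) 0
    exact (Real.continuous_exp.comp this.neg).measurable
  have hDpos : ∀ ω s, 0 ≤ D ω s := fun ω s => (Real.exp_pos _).le
  have hD1 : ∀ ω s, 0 ≤ s → D ω s ≤ 1 := fun ω s hs => by
    simp only [hD]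
    rw [Real.exp_le_one_iff, neg_nonpos]
    exact intervalIntegral.integral_nonneg hs fun u _ => hr0 _
  have hDc : ∀ ω, Continuous (D ω) := fun ω => by
    have : Continuous fun s => ∫ u in (0:ℝ)..s, r (X u ω) :=
      intervalIntegral.continuous_primitive
        (hII _ Cr (hr.comp (hXi ω)) (fun s => hrb _)) 0
    exact (Real.continuous_exp.comp this.neg)
  have hfi : ∀ ω a b, IntervalIntegrable (fun s => f (X s ω)) volume a b := fun ω =>
    hII _ Cf (hf.comp (hXi ω)) (fun s => hfb _)
  have main : ∀ ε : ℝ, 0 < ε → ∃ Cbar : ℝ,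
      ∀ τ : Ω → ℝ, (∀ ω, 0 ≤ τ ω) →
        ∫ ω, (∫ s in (0:ℝ)..(τ ω), D ω s * (f (X s ω) - (c + ε))) ∂P ≤ Cbar := by
    intro ε hε
    obtain ⟨N, p, hp, hN⟩ := hLD 1 one_pos ε hε
    have hWi : ∀ ω a b, IntervalIntegrable (fun s => D ω s * (f (X s ω) - (c + ε))) volume a b :=
      fun ω a b => ((hfi ω a b).sub intervalIntegrable_const).continuousOn_mul (hDc ω).continuousOn
    refine aux_abs P (fun t ω => ∫ s in (0:ℝ)..t, D ω s * (f (X s ω) - (c + ε)))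
      (|Cf| + |c + ε|) (by positivity) ?_ (by simp) N p hp ?_
    · intro ω s t hs hst
      have h1 := intervalIntegral.integral_add_adjacent_intervals (hWi ω 0 s) (hWi ω s t)
      have h2 := intervalIntegral.norm_integral_le_of_norm_le_const (a := s) (b := t)
        (f := fun s => D ω s * (f (X s ω) - (c + ε))) (C := |Cf| + |c + ε|) (fun x hx => by
          rw [uIoc_of_le hst] at hx
          rw [norm_mul, Real.norm_of_nonneg (hDpos ω x), Real.norm_eq_abs]
          have a1 := hD1 ω x (hs.trans hx.1.le)
          have a2 := (abs_sub (f (X x ω)) (c + ε)).trans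
            (add_le_add_left ((hfb _).trans (le_abs_self _)) _)
          calc _ ≤ 1 * |f (X x ω) - (c + ε)| := by gcongr
            _ ≤ _ := by rw [one_mul]; exact a2)
      rw [abs_of_nonneg (sub_nonneg.2 hst)] at h2
      have h3 := (le_abs_self _).trans h2
      rw [← h1]
      linarith
    · intro n hn
      refine (measure_mono ?_).trans ((hN n hn).trans_eq (by simp))
      intro ω hω
      simp only [mem_setOf_eq, mul_one] at hω ⊢
      refine lt_of_lt_of_le ?_ (le_abs_self _)
      have e : (∫ s in (0:ℝ)..n, D ω s * (f (X s ω) - (c + ε))) =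
          (∫ s in (0:ℝ)..n, D ω s * f (X s ω)) - (c + ε) * ∫ s in (0:ℝ)..n, D ω s := by
        rw [← intervalIntegral.integral_const_mul, ← intervalIntegral.integral_sub]
        · congr 1; ext s; ring
        · exact (hfi ω _ _).continuousOn_mul (hDc ω).continuousOn
        · exact ((hDc ω).intervalIntegrable _ _).const_mul _
      rw [e] at hω
      linarith
  have main2 : ∀ ε : ℝ, 0 < ε → ε < -c → ∃ Cbar : ℝ,
      ∀ τ : Ω → ℝ, IsStoppingTime 𝓕 (fun ω => (τ ω : WithTop ℝ)) → (∀ ω, 0 ≤ τ ω) →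
        ∀ T : ℝ, 0 ≤ T → ∫ ω, (∫ s in (0:ℝ)..(min (τ ω) T),
          D ω s * (f (X s ω) - (c + ε))) ∂P ≤ Cbar := by
    intro ε hε _
    obtain ⟨C, hC⟩ := main ε hε
    exact ⟨C, fun τ _ hτ T hT => hC _ fun ω => le_min (hτ ω) hT⟩
  exact ⟨⟨c + (-c / 2), by linarith, main2 (-c / 2) (by linarith) (by linarith)⟩, main2⟩
end

section
/- Assume f, g : E → ℝ are bounded and continuous and X has right-continuous paths. Let w : E → ℝ be lower semicontinuous with w ≥ g pointwise. For a stopping time τ set V_r(τ) := limsup_{T→∞} E[∫₀^{τ∧T} e^{−α_s} f(X_s) ds + e^{−α_{τ∧T}} g(X_{τ∧T})], and let w₀ := sup_τ V_r(τ), the supremum over all stopping times. Assume: (i) Z_t := ∫₀^t e^{−α_s} f(X_s) ds + e^{−α_t} w(X_t) consists of integrable random variables, is adapted, satisfies the optional-sampling supermartingale property, and Z_0 = w₀ a.s.; (ii) there exist d < 0 and γ_r ∈ ℝ such that E[∫₀^{τ∧T} e^{−α_s} (f(X_s) − d) ds] ≤ γ_r for every stopping time τ and every T ≥ 0; (iii)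 there exists a nondecreasing sequence (σ_m) of bounded stopping times with V_r(σ_m) ≥ w₀ − 1/m for every m ≥ 1; (iv) for ε > 0 the random time τ_ε := inf{t ≥ 0 : g(X_t) ≥ w(X_t) − ε} is a stopping time and g(X_{τ_ε}) ≥ w(X_{τ_ε}) − ε a.s. on {τ_ε < ∞}. Then for every ε > 0 the stopping time τ_ε is ε-optimal: V_r(τ_ε) ≥ w₀ − ε. -/
open MeasureTheory Filter Set
open scoped ENNReal Topology Classical

/-- The discounted expected payoff
`E[∫₀^{τ∧T} e^{−α_s} f(X_s) ds + e^{−α_{τ∧T}} g(X_{τ∧T})]` with `α_t = ∫₀^t r(X_u) du`,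
for a possibly infinite stopping time `τ` truncated at horizon `T`. -/
noncomputable def discTruncPayoff {Ω E : Type*} [MeasurableSpace Ω]
    (P : Measure Ω) (X : ℝ → Ω → E) (r f g : E → ℝ) (τ : Ω → ℝ≥0∞) (T : ℝ) : ℝ :=
  ∫ ω, ((∫ s in (0:ℝ)..((min (τ ω) (ENNReal.ofReal T)).toReal),
        Real.exp (-(∫ u in (0:ℝ)..s, r (X u ω))) * f (X s ω))
      + Real.exp (-(∫ u in (0:ℝ)..((min (τ ω) (ENNReal.ofReal T)).toReal), r (X u ω)))
          * g (X ((min (τ ω) (ENNReal.ofReal T)).toReal) ω)) ∂P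

/-- The discounted value
`V_r(τ) = limsup_{T→∞} E[∫₀^{τ∧T} e^{−α_s} f(X_s) ds + e^{−α_{τ∧T}} g(X_{τ∧T})]`. -/
noncomputable def discStopValue {Ω E : Type*} [MeasurableSpace Ω]
    (P : Measure Ω) (X : ℝ → Ω → E) (r f g : E → ℝ) (τ : Ω → ℝ≥0∞) : ℝ :=
  Filter.limsup (fun T : ℝ => discTruncPayoff P X r f g τ T) Filter.atTop

/-- The hitting time `τ_ε = inf {t ≥ 0 : g(X_t) ≥ w(X_t) − ε}` (`∞` if no such time). -/
noncomputable def hitTime {Ω E : Type*} (X : ℝ → Ω → E) (g w : E → ℝ) (ε : ℝ)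
    (ω : Ω) : ℝ≥0∞ :=
  sInf (ENNReal.ofReal '' {t : ℝ | 0 ≤ t ∧ w (X t ω) - ε ≤ g (X t ω)})

set_option linter.unusedSectionVars false

noncomputable def aDsc {Ω E : Type*} (X : ℝ → Ω → E) (r : E → ℝ) (t : ℝ) (ω : Ω) : ℝ :=
  Real.exp (-(∫ u in (0:ℝ)..t, r (X u ω)))

noncomputable def aRun {Ω E : Type*} (X : ℝ → Ω → E) (r f : E → ℝ) (t : ℝ) (ω : Ω) : ℝ :=
  ∫ s in (0:ℝ)..t, aDsc X r s ω * f (X s ω)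

theorem joint_meas {Ω : Type*} {m0 : MeasurableSpace Ω} (𝓕 : Filtration ℝ m0)
    {E : Type*} [MetricSpace E] [MeasurableSpace E] [BorelSpace E]
    (X : ℝ → Ω → E) (hX : IsStronglyProgressive 𝓕 X) : Measurable (Function.uncurry X) := by
  refine StronglyMeasurable.measurable ?_
  refine stronglyMeasurable_of_tendsto (f := fun (n : ℕ) (p : ℝ × Ω) => X (min p.1 n) p.2)
    atTop ?_ ?_
  · intro n
    have h1 := hX (n : ℝ)
    have h2 : Measurable[_, @Prod.instMeasurableSpace _ _ _ (𝓕 (n:ℝ))]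
        (fun p : ℝ × Ω => ((⟨min p.1 n, Set.mem_Iic.2 (min_le_right _ _)⟩ : Set.Iic (n:ℝ)), p.2)) := by
      refine @Measurable.prodMk _ _ _ _ _ (𝓕 (n:ℝ)) _ _ ?_ ?_
      · exact Measurable.subtype_mk (measurable_fst.min measurable_const)
      · exact measurable_snd.mono le_rfl (𝓕.le n)
    exact h1.comp_measurable h2
  · rw [tendsto_pi_nhds]
    rintro ⟨s, ω⟩
    refine tendsto_const_nhds.congr' ?_
    obtain ⟨n, hn⟩ := exists_nat_ge s
    filter_upwards [eventually_ge_atTop n] with k hk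
    have : s ≤ k := hn.trans (by exact_mod_cast hk)
    simp [Function.uncurry, min_eq_left this]

section path
variable {Ω : Type*} [MeasurableSpace Ω] {E : Type*} [MeasurableSpace E] {X : ℝ → Ω → E}
  {r f : E → ℝ} {Cr Cf : ℝ}

theorem ii_bdd (hX : Measurable (Function.uncurry X)) (hf : Measurable f)
    (hb : ∀ x, |f x| ≤ Cf) (ω : Ω) (a b : ℝ) :
    IntervalIntegrable (fun s => f (X s ω)) volume a b := by
  have hm : Measurable (fun s => f (X s ω)) :=
    hf.comp (hX.comp (measurable_id.prodMk measurable_const))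
  refine (intervalIntegrable_const (c := Cf)).mono_fun hm.aestronglyMeasurable ?_
  refine Eventually.of_forall fun s => ?_
  simpa using (hb (X s ω)).trans (le_abs_self _)

theorem prim_meas {h : ℝ → Ω → ℝ} (hm : Measurable (Function.uncurry h))
    (hi : ∀ ω a b, IntervalIntegrable (fun s => h s ω) volume a b) :
    Measurable (Function.uncurry fun t ω => ∫ s in (0:ℝ)..t, h s ω) := by
  refine measurable_uncurry_of_continuous_of_measurable ?_ ?_
  · exact fun ω => intervalIntegral.continuous_primitive (hi ω) 0
  · intro t
    simp only [intervalIntegral]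
    exact (hm.stronglyMeasurable.integral_prod_left).measurable.sub
      (hm.stronglyMeasurable.integral_prod_left).measurable

theorem aDsc_meas (hX : Measurable (Function.uncurry X)) (hr : Measurable r)
    (hrb : ∀ x, |r x| ≤ Cr) : Measurable (Function.uncurry (aDsc X r)) := by
  have := prim_meas (h := fun s ω => r (X s ω)) (hr.comp hX) (fun ω => ii_bdd hX hr hrb ω)
  exact Real.measurable_exp.comp this.neg

theorem aDsc_cont (hX : Measurable (Function.uncurry X)) (hr : Measurable r)
    (hrb : ∀ x, |r x| ≤ Cr) (ω : Ω) : Continuous (fun t => aDsc X r t ω) := by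
  have := intervalIntegral.continuous_primitive (ii_bdd hX hr hrb ω) 0
  exact Real.continuous_exp.comp this.neg

theorem aDsc_anti (hX : Measurable (Function.uncurry X)) (hr : Measurable r)
    (hrb : ∀ x, |r x| ≤ Cr) (hr0 : ∀ x, 0 ≤ r x) (ω : Ω) {s t : ℝ} (h : s ≤ t) :
    aDsc X r t ω ≤ aDsc X r s ω := by
  unfold aDsc
  have h1 := intervalIntegral.integral_add_adjacent_intervals
    (ii_bdd hX hr hrb ω 0 s) (ii_bdd hX hr hrb ω s t)
  have h2 := intervalIntegral.integral_nonneg (μ := volume) h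
    (f := fun s => r (X s ω)) (fun u _ => hr0 _)
  refine Real.exp_le_exp.2 ?_
  linarith

theorem aDsc_pos (t : ℝ) (ω : Ω) : 0 < aDsc X r t ω := Real.exp_pos _

theorem aDsc_zero (ω : Ω) : aDsc X r 0 ω = 1 := by simp [aDsc]

theorem aDsc_le_one (hX : Measurable (Function.uncurry X)) (hr : Measurable r)
    (hrb : ∀ x, |r x| ≤ Cr) (hr0 : ∀ x, 0 ≤ r x) (ω : Ω) {t : ℝ} (h : 0 ≤ t) :
    aDsc X r t ω ≤ 1 := (aDsc_anti hX hr hrb hr0 ω h).trans (aDsc_zero ω).le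

theorem aRun_ii (hX : Measurable (Function.uncurry X)) (hr : Measurable r)
    (hrb : ∀ x, |r x| ≤ Cr) (hf : Measurable f) (hb : ∀ x, |f x| ≤ Cf) (ω : Ω) (a b : ℝ) :
    IntervalIntegrable (fun s => aDsc X r s ω * f (X s ω)) volume a b :=
  (ii_bdd hX hf hb ω a b).continuousOn_mul (aDsc_cont hX hr hrb ω).continuousOn

theorem aRun_meas (hX : Measurable (Function.uncurry X)) (hr : Measurable r)
    (hrb : ∀ x, |r x| ≤ Cr) (hf : Measurable f) (hb : ∀ x, |f x| ≤ Cf) :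
    Measurable (Function.uncurry (aRun X r f)) :=
  prim_meas (h := fun s ω => aDsc X r s ω * f (X s ω))
    ((aDsc_meas hX hr hrb).mul (hf.comp hX)) (fun ω => aRun_ii hX hr hrb hf hb ω)

theorem aRun_cont (hX : Measurable (Function.uncurry X)) (hr : Measurable r)
    (hrb : ∀ x, |r x| ≤ Cr) (hf : Measurable f) (hb : ∀ x, |f x| ≤ Cf) (ω : Ω) :
    Continuous (fun t => aRun X r f t ω) :=
  intervalIntegral.continuous_primitive (aRun_ii hX hr hrb hf hb ω) 0

theorem aRun_one_mono (hX : Measurable (Function.uncurry X)) (hr : Measurable r)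
    (hrb : ∀ x, |r x| ≤ Cr) (ω : Ω) {s t : ℝ} (h : s ≤ t) :
    aRun X r (fun _ => 1) s ω ≤ aRun X r (fun _ => 1) t ω := by
  have hi := fun a b => aRun_ii (f := fun _ => 1) (Cf := 1) hX hr hrb measurable_const
    (by simp) ω a b
  have h1 := intervalIntegral.integral_add_adjacent_intervals (hi 0 s) (hi s t)
  have h2 := intervalIntegral.integral_nonneg (μ := volume) h
    (f := fun s => aDsc X r s ω * 1) (fun u _ => by simpa using (aDsc_pos u ω).le)
  unfold aRun
  linarith

theorem aRun_abs_le (hX : Measurable (Function.uncurry X)) (hr : Measurable r)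
    (hrb : ∀ x, |r x| ≤ Cr) (hb : ∀ x, |f x| ≤ Cf) (ω : Ω) {t : ℝ} (h : 0 ≤ t) :
    |aRun X r f t ω| ≤ Cf * aRun X r (fun _ => 1) t ω := by
  have hi := fun a b => aRun_ii (f := fun _ => 1) (Cf := 1) hX hr hrb measurable_const
    (by simp) ω a b
  unfold aRun
  rw [← intervalIntegral.integral_const_mul]
  rw [← Real.norm_eq_abs]
  refine intervalIntegral.norm_integral_le_of_norm_le h ?_ ((hi 0 t).const_mul Cf)
  refine Eventually.of_forall fun s _ => ?_
  have := hb (X s ω)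
  rw [Real.norm_eq_abs, abs_mul, abs_of_pos (aDsc_pos s ω)]
  nlinarith [aDsc_pos (X := X) (r := r) s ω]

theorem aRun_one_le (hX : Measurable (Function.uncurry X)) (hr : Measurable r)
    (hrb : ∀ x, |r x| ≤ Cr) (hr0 : ∀ x, 0 ≤ r x) (ω : Ω) {t : ℝ} (h : 0 ≤ t) :
    aRun X r (fun _ => 1) t ω ≤ t := by
  have hi := fun a b => aRun_ii (f := fun _ => 1) (Cf := 1) hX hr hrb measurable_const
    (by simp) ω a b
  have := intervalIntegral.integral_mono_on h (hi 0 t) (intervalIntegrable_const (c := (1:ℝ)))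
    (fun s hs => by simpa using aDsc_le_one hX hr hrb hr0 ω hs.1)
  simpa [aRun] using this

theorem aRun_zero (ω : Ω) : aRun X r f 0 ω = 0 := by simp [aRun]

theorem aRun_sub (hX : Measurable (Function.uncurry X)) (hr : Measurable r)
    (hrb : ∀ x, |r x| ≤ Cr) (hf : Measurable f) (hb : ∀ x, |f x| ≤ Cf) (d t : ℝ) (ω : Ω) :
    aRun X r (fun x => f x - d) t ω = aRun X r f t ω - d * aRun X r (fun _ => 1) t ω := by
  have hi := fun a b => aRun_ii (f := fun _ => 1) (Cf := 1) hX hr hrb measurable_const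
    (by simp) ω a b
  unfold aRun
  rw [← intervalIntegral.integral_const_mul, ← intervalIntegral.integral_sub
    (aRun_ii hX hr hrb hf hb ω 0 t) ((hi 0 t).const_mul d)]
  congr 1
  ext s
  ring

/-- aDsc bounded below: sequences with discount to zero go to infinity. -/
theorem aDsc_lower (hX : Measurable (Function.uncurry X)) (hr : Measurable r)
    (hrb : ∀ x, |r x| ≤ Cr) (ω : Ω) {t : ℝ} (h : 0 ≤ t) :
    Real.exp (-(Cr * t)) ≤ aDsc X r t ω := by
  have := intervalIntegral.integral_mono_on h (ii_bdd hX hr hrb ω 0 t)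
    (intervalIntegrable_const (c := Cr))
    (fun s hs => (le_abs_self _).trans (hrb (X s ω)))
  refine Real.exp_le_exp.2 ?_
  simp at this
  linarith

theorem aRun_diff (hX : Measurable (Function.uncurry X)) (hr : Measurable r)
    (hrb : ∀ x, |r x| ≤ Cr) (hr0 : ∀ x, 0 ≤ r x) (hf : Measurable f) (hb : ∀ x, |f x| ≤ Cf)
    (ω : Ω) {a b : ℝ} (ha : 0 ≤ a) (hab : a ≤ b) (hba : b ≤ a + 1) :
    aRun X r f a ω ≤ aRun X r f b ω + Cf := by
  have hi := aRun_ii hX hr hrb hf hb ω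
  have h1 := intervalIntegral.integral_add_adjacent_intervals (hi 0 a) (hi a b)
  have hCf : 0 ≤ Cf := (abs_nonneg _).trans (hb (X 0 ω))
  have h2 : ‖∫ s in a..b, aDsc X r s ω * f (X s ω)‖ ≤ Cf * |b - a| := by
    refine intervalIntegral.norm_integral_le_of_norm_le_const fun s hs => ?_
    rw [uIoc_of_le hab] at hs
    rw [Real.norm_eq_abs, abs_mul, abs_of_pos (aDsc_pos s ω)]
    have := mul_le_mul (aDsc_le_one hX hr hrb hr0 ω (ha.trans hs.1.le)) (hb (X s ω))
      (abs_nonneg _) zero_le_one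
    linarith
  rw [abs_of_nonneg (by linarith), Real.norm_eq_abs] at h2
  have h3 := (abs_le.1 h2).1
  unfold aRun
  nlinarith
end path

theorem disc_stop {Ω : Type*} {m0 : MeasurableSpace Ω} (𝓕 : Filtration ℝ m0) (σ : Ω → ℝ)
    (hσ : IsStoppingTime 𝓕 (fun ω => (σ ω : WithTop ℝ))) (hσ0 : ∀ ω, 0 ≤ σ ω) (n : ℕ) :
    IsStoppingTime 𝓕
      (fun ω => ((((⌊((n:ℝ) + 1) * σ ω⌋₊ : ℝ) + 1) / ((n:ℝ) + 1) : ℝ) : WithTop ℝ)) := by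
  intro t
  have hn : (0:ℝ) < (n:ℝ) + 1 := by positivity
  by_cases ht : 0 ≤ t
  · have hq : (⌊((n:ℝ) + 1) * t⌋₊ : ℝ) / ((n:ℝ) + 1) ≤ t := by
      rw [div_le_iff₀ hn]
      have := Nat.floor_le (a := ((n:ℝ) + 1) * t) (by positivity)
      linarith
    have h := hσ.measurableSet_lt_le hq
    convert h using 1
    ext ω
    simp only [Set.mem_ofPred_eq, WithTop.coe_le_coe, WithTop.coe_lt_coe]
    rw [div_le_iff₀ hn, lt_div_iff₀ hn, mul_comm t, mul_comm (σ ω)]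
    have h0 : 0 ≤ ((n:ℝ) + 1) * σ ω := mul_nonneg hn.le (hσ0 ω)
    rw [← Nat.floor_lt h0, ← Nat.succ_le_iff, Nat.le_floor_iff (by positivity)]
    push_cast
    rfl
  · convert @MeasurableSet.empty _ (𝓕 t) using 1
    ext ω
    simp only [Set.mem_ofPred_eq, WithTop.coe_le_coe, Set.mem_empty_iff_false, iff_false, not_le]
    have : 0 < ((⌊((n:ℝ) + 1) * σ ω⌋₊ : ℝ) + 1) / ((n:ℝ) + 1) := by positivity
    linarith

theorem stop_meas {Ω : Type*} {m0 : MeasurableSpace Ω} (𝓕 : Filtration ℝ m0) (σ : Ω → ℝ)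
    (hσ : IsStoppingTime 𝓕 (fun ω => (σ ω : WithTop ℝ))) : Measurable σ := by
  refine measurable_of_Iic fun t => ?_
  have := 𝓕.le t _ (hσ t)
  simp only [WithTop.coe_le_coe] at this
  exact this

theorem samp_meas {Ω β : Type*} [MeasurableSpace Ω] [MeasurableSpace β] {Z : ℝ → Ω → β}
    (hZ : Measurable (Function.uncurry Z)) {σ : Ω → ℝ} (hσ : Measurable σ) :
    Measurable (fun ω => Z (σ ω) ω) := hZ.comp (hσ.prodMk measurable_id)

theorem samp_int {Ω : Type*} {m0 : MeasurableSpace Ω} (P : Measure Ω) [IsProbabilityMeasure P]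
    (𝓕 : Filtration ℝ m0) (Z : ℝ → Ω → ℝ) (hZm : Measurable (Function.uncurry Z))
    (hZi : ∀ t, 0 ≤ t → Integrable (Z t) P) (w₀ : ℝ)
    (hlow : ∀ T : ℝ, ∃ c : ℝ, ∀ t ω, 0 ≤ t → t ≤ T → -c ≤ Z t ω)
    (hlsc : ∀ ω t, 0 ≤ t → ∀ y < Z t ω, ∀ᶠ s in 𝓝[≥] t, y < Z s ω)
    (hsup : ∀ σ : Ω → ℝ, IsStoppingTime 𝓕 (fun ω => (σ ω : WithTop ℝ)) → (∀ ω, 0 ≤ σ ω) →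
      (∃ T, ∀ ω, σ ω ≤ T) → Integrable (fun ω => Z (σ ω) ω) P → ∫ ω, Z (σ ω) ω ∂P ≤ w₀)
    (σ : Ω → ℝ) (hσ : IsStoppingTime 𝓕 (fun ω => (σ ω : WithTop ℝ))) (hσ0 : ∀ ω, 0 ≤ σ ω)
    (T : ℝ) (hT : ∀ ω, σ ω ≤ T) : Integrable (fun ω => Z (σ ω) ω) P := by
  set q : ℕ → Ω → ℝ := fun n ω => ((⌊((n:ℝ) + 1) * σ ω⌋₊ : ℝ) + 1) / ((n:ℝ) + 1) with hq
  have hn : ∀ n : ℕ, (0:ℝ) < (n:ℝ) + 1 := fun n => by positivity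
  have hqst : ∀ n, IsStoppingTime 𝓕 (fun ω => (q n ω : WithTop ℝ)) :=
    fun n => disc_stop 𝓕 σ hσ hσ0 n
  have hq0 : ∀ n ω, 0 ≤ q n ω := fun n ω => by simp only [hq]; positivity
  have hqge : ∀ n ω, σ ω ≤ q n ω := fun n ω => by
    simp only [hq]
    rw [le_div_iff₀ (hn n)]
    have := Nat.lt_floor_add_one (((n:ℝ) + 1) * σ ω)
    linarith
  have hqle : ∀ n ω, q n ω ≤ σ ω + 1 / ((n:ℝ) + 1) := fun n ω => by
    simp only [hq]
    rw [add_div]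
    gcongr
    rw [div_le_iff₀ (hn n)]
    have := Nat.floor_le (a := ((n:ℝ) + 1) * σ ω) (mul_nonneg (hn n).le (hσ0 ω))
    linarith
  have hqT : ∀ n ω, q n ω ≤ T + 1 := fun n ω => by
    have h1 : 1 / ((n:ℝ) + 1) ≤ 1 := by
      rw [div_le_one (hn n)]; linarith [(Nat.cast_nonneg n : (0:ℝ) ≤ n)]
    linarith [hqle n ω, hT ω]
  have hqm : ∀ n, Measurable (q n) := fun n => stop_meas 𝓕 _ (hqst n)
  have hqi : ∀ n, Integrable (fun ω => Z (q n ω) ω) P := fun n => by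
    have hS : Integrable (fun ω => ∑ k ∈ Finset.range (⌊((n:ℝ) + 1) * T⌋₊ + 1),
        |Z (((k:ℝ) + 1) / ((n:ℝ) + 1)) ω|) P :=
      integrable_finsetSum _ fun k _ => (hZi _ (by positivity)).abs
    refine hS.mono' (samp_meas hZm (hqm n)).aestronglyMeasurable ?_
    refine Eventually.of_forall fun ω => ?_
    have hmem : ⌊((n:ℝ) + 1) * σ ω⌋₊ ∈ Finset.range (⌊((n:ℝ) + 1) * T⌋₊ + 1) := by
      rw [Finset.mem_range, Nat.lt_succ_iff]
      exact Nat.floor_le_floor (mul_le_mul_of_nonneg_left (hT ω) (hn n).le)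
    exact Finset.single_le_sum (f := fun k : ℕ => |Z (((k:ℝ) + 1) / ((n:ℝ) + 1)) ω|)
      (fun k _ => abs_nonneg _) hmem
  obtain ⟨c, hc⟩ := hlow (T + 1)
  have hσm := stop_meas 𝓕 σ hσ
  have hZσm := samp_meas hZm hσm
  have hfat := lintegral_liminf_le (μ := P) (u := atTop)
    (f := fun (n : ℕ) ω => ENNReal.ofReal (Z (q n ω) ω + c))
    (fun n => ((samp_meas hZm (hqm n)).add_const c).ennreal_ofReal)
  have hub : ∀ n, ∫⁻ ω, ENNReal.ofReal (Z (q n ω) ω + c) ∂P ≤ ENNReal.ofReal (w₀ + c) := by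
    intro n
    rw [← ofReal_integral_eq_lintegral_ofReal (f := fun ω => Z (q n ω) ω + c) ((hqi n).add (integrable_const c))
      (Eventually.of_forall fun ω => by
        have := hc (q n ω) ω (hq0 n ω) (hqT n ω)
        simp only [Pi.zero_apply]; linarith)]
    refine ENNReal.ofReal_le_ofReal ?_
    have := hsup (q n) (hqst n) (hq0 n) ⟨_, hqT n⟩ (hqi n)
    rw [integral_add (hqi n) (integrable_const c)]
    simpa using this
  have hlim : ∀ ω, ENNReal.ofReal (Z (σ ω) ω + c) ≤
      liminf (fun n : ℕ => ENNReal.ofReal (Z (q n ω) ω + c)) atTop := by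
    intro ω
    refine le_of_forall_lt fun y hy => ?_
    obtain ⟨y', hy1, hy2⟩ := exists_between hy
    refine lt_of_lt_of_le hy1 (le_liminf_of_le (by isBoundedDefault) ?_)
    have hy'top : y' ≠ ⊤ := (hy2.trans_le le_top).ne
    have h1 : y'.toReal - c < Z (σ ω) ω := by
      have := (ENNReal.lt_ofReal_iff_toReal_lt hy'top).1 hy2
      linarith
    have htend : Tendsto (fun n : ℕ => q n ω) atTop (𝓝[≥] (σ ω)) := by
      refine tendsto_nhdsWithin_iff.2 ⟨?_, Eventually.of_forall fun n => hqge n ω⟩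
      refine tendsto_of_tendsto_of_tendsto_of_le_of_le tendsto_const_nhds ?_
        (fun n => hqge n ω) (fun n => hqle n ω)
      simpa using tendsto_const_nhds.add tendsto_one_div_add_atTop_nhds_zero_nat (a := σ ω)
    filter_upwards [htend.eventually (hlsc ω (σ ω) (hσ0 ω) _ h1)] with n hnn
    rw [← ENNReal.ofReal_toReal hy'top]
    exact ENNReal.ofReal_le_ofReal (by linarith)
  have hfin : ∫⁻ ω, ENNReal.ofReal (Z (σ ω) ω + c) ∂P ≤ ENNReal.ofReal (w₀ + c) := by
    refine (lintegral_mono hlim).trans (hfat.trans ?_)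
    refine (liminf_le_liminf (Eventually.of_forall hub)).trans ?_
    simp
  have hI : Integrable (fun ω => Z (σ ω) ω + c) P := by
    refine ⟨(hZσm.add_const c).aestronglyMeasurable, ?_⟩
    rw [hasFiniteIntegral_iff_ofReal]
    · exact hfin.trans_lt ENNReal.ofReal_lt_top
    · refine Eventually.of_forall fun ω => ?_
      have := hc (σ ω) ω (hσ0 ω) (by linarith [hT ω])
      simp only [Pi.zero_apply]; linarith
  refine (hI.sub (integrable_const c)).congr (Eventually.of_forall fun ω => ?_)
  simp

theorem conv_part {Ω : Type*} {m0 : MeasurableSpace Ω} (P : Measure Ω) [IsProbabilityMeasure P]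
    {E : Type*} [MeasurableSpace E] {X : ℝ → Ω → E} {r f g : E → ℝ} {Cr Cf Cg : ℝ}
    (hX : Measurable (Function.uncurry X)) (hr : Measurable r)
    (hrb : ∀ x, |r x| ≤ Cr) (hr0 : ∀ x, 0 ≤ r x) (hf : Measurable f) (hfb : ∀ x, |f x| ≤ Cf)
    (hg : Measurable g) (hgb : ∀ x, |g x| ≤ Cg) (hCf : 0 ≤ Cf)
    (τ : Ω → ℝ≥0∞) (hτ : Measurable τ) (s : ℕ → Ω → ℝ) (hs : ∀ m, Measurable (s m))
    (hs0 : ∀ m ω, 0 ≤ s m ω) (hsm : ∀ ω, Monotone fun m => s m ω)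
    (hY : ∀ᵐ ω ∂P, (∀ m, ENNReal.ofReal (s m ω) < τ ω) →
      Tendsto (fun m => aDsc X r (s m ω) ω) atTop (𝓝 0))
    (K : ℝ) (hJi : ∀ m, Integrable
      (fun ω => aRun X r (fun _ => 1) (min (τ ω) (ENNReal.ofReal (s m ω))).toReal ω) P)
    (hJ : ∀ m, ∫ ω, aRun X r (fun _ => 1) (min (τ ω) (ENNReal.ofReal (s m ω))).toReal ω ∂P ≤ K) :
    ∃ L : ℝ, Tendsto (fun m => ∫ ω, (aRun X r f (min (τ ω) (ENNReal.ofReal (s m ω))).toReal ω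
        + aDsc X r (min (τ ω) (ENNReal.ofReal (s m ω))).toReal ω *
          g (X (min (τ ω) (ENNReal.ofReal (s m ω))).toReal ω)) ∂P) atTop (𝓝 L) ∧
      Tendsto (fun T : ℝ => ∫ ω, (aRun X r f (min (τ ω) (ENNReal.ofReal T)).toReal ω
        + aDsc X r (min (τ ω) (ENNReal.ofReal T)).toReal ω *
          g (X (min (τ ω) (ENNReal.ofReal T)).toReal ω)) ∂P) atTop (𝓝 L) := by
  set J := aRun X r (fun _ => 1) with hJdef
  set ρ : ℕ → Ω → ℝ := fun m ω => (min (τ ω) (ENNReal.ofReal (s m ω))).toReal with hρ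
  set θ : ℝ → Ω → ℝ := fun T ω => (min (τ ω) (ENNReal.ofReal T)).toReal with hθ
  have hρm : ∀ m, Measurable (ρ m) := fun m => (hτ.min (hs m).ennreal_ofReal).ennreal_toReal
  have hθm : ∀ T, Measurable (θ T) := fun T => (hτ.min measurable_const).ennreal_toReal
  have hJmono : ∀ ω, Monotone fun t => J t ω := fun ω a b hab => aRun_one_mono hX hr hrb ω hab
  have hJ0 : ∀ ω t, 0 ≤ t → 0 ≤ J t ω := fun ω t ht =>
    (aRun_zero (X := X) (r := r) (f := fun _ => 1) ω).symm.le.trans (hJmono ω ht)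
  have hρmono : ∀ ω, Monotone fun m => ρ m ω := fun ω a b hab => by
    refine ENNReal.toReal_mono (by simp) ?_
    exact min_le_min le_rfl (ENNReal.ofReal_le_ofReal (hsm ω hab))
  have hJm : Measurable (Function.uncurry J) :=
    aRun_meas (Cf := 1) hX hr hrb measurable_const (by simp)
  -- the dominating function
  set JE : Ω → ℝ≥0∞ := fun ω => ⨆ m, ENNReal.ofReal (J (ρ m ω) ω) with hJE
  have hJEm : Measurable JE := Measurable.iSup fun m => (samp_meas hJm (hρm m)).ennreal_ofReal
  have hJEle : ∫⁻ ω, JE ω ∂P ≤ ENNReal.ofReal K := by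
    rw [hJE, lintegral_iSup (fun m => (samp_meas hJm (hρm m)).ennreal_ofReal)]
    · refine iSup_le fun m => ?_
      rw [← ofReal_integral_eq_lintegral_ofReal (hJi m)
        (Eventually.of_forall fun ω => hJ0 ω _ ENNReal.toReal_nonneg)]
      exact ENNReal.ofReal_le_ofReal (hJ m)
    · intro a b hab ω
      exact ENNReal.ofReal_le_ofReal (hJmono ω (hρmono ω hab))
  have hJEne : ∫⁻ ω, JE ω ∂P ≠ ⊤ := (hJEle.trans_lt ENNReal.ofReal_lt_top).ne
  have hJEi := integrable_toReal_of_lintegral_ne_top hJEm.aemeasurable hJEne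
  have hJEtop := ae_lt_top hJEm hJEne
  have hJρ : ∀ ω, JE ω < ⊤ → ∀ m, J (ρ m ω) ω ≤ (JE ω).toReal := by
    intro ω hω m
    rw [← ENNReal.ofReal_le_iff_le_toReal hω.ne]
    exact le_iSup (fun m => ENNReal.ofReal (J (ρ m ω) ω)) m
  -- dichotomy
  have hdich : ∀ᵐ ω ∂P, (τ ω ≠ ⊤ ∧ ∃ m, ∀ k ≥ m, ρ k ω = (τ ω).toReal) ∨
      (τ ω = ⊤ ∧ (∀ m, ρ m ω = s m ω) ∧ Tendsto (fun m => s m ω) atTop atTop ∧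
        Tendsto (fun m => aDsc X r (s m ω) ω) atTop (𝓝 0)) := by
    filter_upwards [hY] with ω hω
    by_cases h : ∀ m, ENNReal.ofReal (s m ω) < τ ω
    · right
      have hD := hω h
      have htop : Tendsto (fun m => s m ω) atTop atTop := by
        refine tendsto_atTop_atTop_of_monotone (hsm ω) fun b => ?_
        by_contra hcon
        push Not at hcon
        have hb : ∀ m, Real.exp (-(Cr * b)) ≤ aDsc X r (s m ω) ω := fun m => by
          refine le_trans ?_ (aDsc_lower hX hr hrb ω (hs0 m ω))
          refine Real.exp_le_exp.2 ?_
          have hCr : 0 ≤ Cr := (abs_nonneg _).trans (hrb (X 0 ω))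
          nlinarith [hcon m]
        have := ge_of_tendsto' hD hb
        exact absurd this (not_le.2 (Real.exp_pos _))
      refine ⟨?_, ?_, htop, hD⟩
      · by_contra hne
        obtain ⟨m, hm⟩ := (htop.eventually_ge_atTop ((τ ω).toReal)).exists
        have h1 := h m
        rw [ENNReal.ofReal_lt_iff_lt_toReal (hs0 m ω) hne] at h1
        linarith
      · intro m
        simp only [hρ]
        rw [min_eq_right (h m).le, ENNReal.toReal_ofReal (hs0 m ω)]
    · left
      push Not at h
      obtain ⟨m, hm⟩ := h
      refine ⟨(hm.trans_lt ENNReal.ofReal_lt_top).ne, m, fun k hk => ?_⟩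
      simp only [hρ]
      rw [min_eq_left (hm.trans (ENNReal.ofReal_le_ofReal (hsm ω hk)))]
  have hθρ : ∀ᵐ ω ∂P, ∀ T, ∃ m, θ T ω ≤ ρ m ω := by
    filter_upwards [hdich] with ω hω T
    rcases hω with ⟨hne, m, hm⟩ | ⟨htop, hρs, hst, _⟩
    · refine ⟨m, ?_⟩
      rw [hm m le_rfl]
      exact ENNReal.toReal_mono hne (min_le_left _ _)
    · obtain ⟨m, hm⟩ := (hst.eventually_ge_atTop T).exists
      refine ⟨m, ?_⟩
      refine ENNReal.toReal_mono (by simp) ?_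
      exact min_le_min le_rfl (ENNReal.ofReal_le_ofReal hm)
  -- limit
  set Lim : Ω → ℝ := fun ω => if τ ω = ⊤ then ∫ u in Ioi (0:ℝ), aDsc X r u ω * f (X u ω)
    else aRun X r f (τ ω).toReal ω + aDsc X r (τ ω).toReal ω * g (X (τ ω).toReal ω) with hLim
  have hDg : ∀ ω t, 0 ≤ t → |aDsc X r t ω * g (X t ω)| ≤ aDsc X r t ω * Cg := fun ω t ht => by
    rw [abs_mul, abs_of_pos (aDsc_pos t ω)]
    exact mul_le_mul_of_nonneg_left (hgb _) (aDsc_pos t ω).le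
  have hbd : ∀ ω t, 0 ≤ t → J t ω ≤ (JE ω).toReal →
      ‖aRun X r f t ω + aDsc X r t ω * g (X t ω)‖ ≤ Cf * (JE ω).toReal + Cg := by
    intro ω t ht hle
    have h1 := aRun_abs_le hX hr hrb hfb ω ht
    have h2 := hDg ω t ht
    have h3 := aDsc_le_one hX hr hrb hr0 ω ht
    have hCg : 0 ≤ Cg := (abs_nonneg _).trans (hgb (X 0 ω))
    rw [Real.norm_eq_abs]
    refine (abs_add_le _ _).trans ?_
    have h4 : Cf * J t ω ≤ Cf * (JE ω).toReal := mul_le_mul_of_nonneg_left hle hCf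
    nlinarith
  have hpm : Measurable (Function.uncurry fun t ω =>
      aRun X r f t ω + aDsc X r t ω * g (X t ω)) :=
    (aRun_meas hX hr hrb hf hfb).add ((aDsc_meas hX hr hrb).mul (hg.comp hX))
  have hbi : Integrable (fun ω => Cf * (JE ω).toReal + Cg) P :=
    (hJEi.const_mul Cf).add (integrable_const _)
  -- convergence along any b → ∞ in the infinite case
  have hinf : ∀ ω, JE ω < ⊤ → (∀ m, ρ m ω = s m ω) → Tendsto (fun m => s m ω) atTop atTop →
      Tendsto (fun m => aDsc X r (s m ω) ω) atTop (𝓝 0) →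
      Tendsto (fun t => aRun X r f t ω + aDsc X r t ω * g (X t ω)) atTop
        (𝓝 (∫ u in Ioi (0:ℝ), aDsc X r u ω * f (X u ω))) := by
    intro ω hJt hρs hst hD
    have hInt : IntegrableOn (fun u => aDsc X r u ω * f (X u ω)) (Ioi 0) := by
      refine integrableOn_Ioi_of_intervalIntegral_norm_bounded (Cf * (JE ω).toReal) 0
        (b := fun m => s m ω) (fun m => ?_) hst (Eventually.of_forall fun m => ?_)
      · exact (intervalIntegrable_iff_integrableOn_Ioc_of_le (hs0 m ω)).1
          (aRun_ii hX hr hrb hf hfb ω 0 (s m ω))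
      · have h1 := hJρ ω hJt m
        rw [hρs m] at h1
        refine le_trans ?_ (mul_le_mul_of_nonneg_left h1 hCf)
        simp only [hJdef, aRun]
        rw [← intervalIntegral.integral_const_mul]
        refine intervalIntegral.integral_mono_on (hs0 m ω)
          (aRun_ii hX hr hrb hf hfb ω 0 (s m ω)).norm
          ((aRun_ii (f := fun _ => 1) (Cf := 1) hX hr hrb measurable_const
            (by simp) ω 0 (s m ω)).const_mul Cf) fun u _ => ?_
        rw [Real.norm_eq_abs, abs_mul, abs_of_pos (aDsc_pos u ω)]
        nlinarith [aDsc_pos (X := X) (r := r) u ω, hfb (X u ω)]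
    have h1 := intervalIntegral_tendsto_integral_Ioi 0 hInt (tendsto_id (α := ℝ))
    have hD' : Tendsto (fun t => aDsc X r t ω) atTop (𝓝 0) := by
      rw [Metric.tendsto_atTop] at hD ⊢
      intro e he
      obtain ⟨N, hN⟩ := hD e he
      refine ⟨s N ω, fun t ht => ?_⟩
      have h2 := hN N le_rfl
      rw [Real.dist_0_eq_abs, abs_of_pos (aDsc_pos _ ω)] at h2 ⊢
      exact (aDsc_anti hX hr hrb hr0 ω ht).trans_lt h2
    have h3 : Tendsto (fun t => aDsc X r t ω * g (X t ω)) atTop (𝓝 0) := by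
      refine squeeze_zero_norm' (a := fun t => aDsc X r t ω * Cg) ?_ ?_
      · filter_upwards [eventually_ge_atTop 0] with t ht
        exact hDg ω t ht
      · simpa using hD'.mul_const Cg
    simpa [aRun] using h1.add h3
  refine ⟨∫ ω, Lim ω ∂P, ?_, ?_⟩
  · refine tendsto_integral_filter_of_dominated_convergence _
      (Eventually.of_forall fun m => (samp_meas hpm (hρm m)).aestronglyMeasurable)
      (Eventually.of_forall fun m => ?_) hbi ?_
    · filter_upwards [hJEtop] with ω hω
      exact hbd ω (ρ m ω) ENNReal.toReal_nonneg (hJρ ω hω m)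
    · filter_upwards [hJEtop, hdich] with ω hω hd
      rcases hd with ⟨hne, m, hm⟩ | ⟨htop, hρs, hst, hD⟩
      · simp only [hLim, if_neg hne]
        refine tendsto_const_nhds.congr' ?_
        filter_upwards [eventually_ge_atTop m] with k hk
        have := hm k hk
        simp only [hρ] at this
        rw [this]
      · simp only [hLim, if_pos htop]
        have := (hinf ω hω hρs hst hD).comp hst
        refine this.congr fun m => ?_
        have h1 := hρs m
        simp only [hρ] at h1
        simp only [Function.comp, h1]
  · refine tendsto_integral_filter_of_dominated_convergence _
      (Eventually.of_forall fun T => (samp_meas hpm (hθm T)).aestronglyMeasurable)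
      (Eventually.of_forall fun T => ?_) hbi ?_
    · filter_upwards [hJEtop, hθρ] with ω hω hle
      obtain ⟨m, hm⟩ := hle T
      exact hbd ω (θ T ω) ENNReal.toReal_nonneg ((hJmono ω hm).trans (hJρ ω hω m))
    · filter_upwards [hJEtop, hdich] with ω hω hd
      rcases hd with ⟨hne, m, hm⟩ | ⟨htop, hρs, hst, hD⟩
      · simp only [hLim, if_neg hne]
        refine tendsto_const_nhds.congr' ?_
        filter_upwards [eventually_ge_atTop (τ ω).toReal] with T hT
        rw [min_eq_left (ENNReal.le_ofReal_iff_toReal_le hne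
          (ENNReal.toReal_nonneg.trans hT) |>.2 hT)]
      · simp only [hLim, if_pos htop]
        refine (hinf ω hω hρs hst hD).congr' ?_
        filter_upwards [eventually_ge_atTop 0] with T hT
        rw [htop, min_eq_right le_top, ENNReal.toReal_ofReal hT]

/-- for the discounted infinite-horizon stopping problem with value `w₀`,
the hitting time `τ_ε = inf{t ≥ 0 : g(X_t) ≥ w(X_t) − ε}` is `ε`-optimal:
`V_r(τ_ε) ≥ w₀ − ε`. -/
theorem stmt19
    {Ω : Type*} {m0 : MeasurableSpace Ω} (P : Measure Ω) [IsProbabilityMeasure P]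
    (𝓕 : Filtration ℝ m0)
    {E : Type*} [MetricSpace E] [MeasurableSpace E] [BorelSpace E]
    (X : ℝ → Ω → E) (hX : ProgMeasurable 𝓕 X)
    (hrc : ∀ ω, ∀ t : ℝ, 0 ≤ t → ContinuousWithinAt (fun s => X s ω) (Ici t) t)
    (f g : E → ℝ) (hfc : Continuous f) (hgc : Continuous g)
    (Cf Cg : ℝ) (hfb : ∀ x, |f x| ≤ Cf) (hgb : ∀ x, |g x| ≤ Cg)
    (r : E → ℝ) (hr : Measurable r) (Cr : ℝ) (hrb : ∀ x, |r x| ≤ Cr)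
    (hr0 : ∀ x, 0 ≤ r x)
    (w : E → ℝ) (hwlsc : LowerSemicontinuous w) (hgw : ∀ x, g x ≤ w x)
    (w₀ : ℝ)
    -- w₀ is the supremum of V_r(τ) over all stopping times τ
    (hub : ∀ τ : Ω → ℝ≥0∞,
      (∀ t : ℝ, MeasurableSet[𝓕 t] {ω | τ ω ≤ ENNReal.ofReal t}) →
      discStopValue P X r f g τ ≤ w₀)
    -- (i) Z is an integrable adapted optional-sampling supermartingale with Z_0 = w₀
    (hZint : ∀ t : ℝ, 0 ≤ t →
      Integrable (fun ω =>
        (∫ s in (0:ℝ)..t, Real.exp (-(∫ u in (0:ℝ)..s, r (X u ω))) * f (X s ω))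
          + Real.exp (-(∫ u in (0:ℝ)..t, r (X u ω))) * w (X t ω)) P)
    (hZadp : ∀ t : ℝ, 0 ≤ t →
      StronglyMeasurable[𝓕 t] fun ω =>
        (∫ s in (0:ℝ)..t, Real.exp (-(∫ u in (0:ℝ)..s, r (X u ω))) * f (X s ω))
          + Real.exp (-(∫ u in (0:ℝ)..t, r (X u ω))) * w (X t ω))
    (hZsup : ∀ (σ₁ σ₂ : Ω → ℝ) (h1 : IsStoppingTime 𝓕 (fun ω => (σ₁ ω : WithTop ℝ)))
      (_h2 : IsStoppingTime 𝓕 (fun ω => (σ₂ ω : WithTop ℝ))),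
      (∀ ω, 0 ≤ σ₁ ω) → (∀ ω, σ₁ ω ≤ σ₂ ω) → (∃ T, ∀ ω, σ₂ ω ≤ T) →
      ∀ᵐ ω ∂P,
        (P[(fun ω' =>
            (∫ s in (0:ℝ)..(σ₂ ω'), Real.exp (-(∫ u in (0:ℝ)..s, r (X u ω'))) * f (X s ω'))
              + Real.exp (-(∫ u in (0:ℝ)..(σ₂ ω'), r (X u ω'))) * w (X (σ₂ ω') ω')) |
            h1.measurableSpace]) ω
          ≤ (∫ s in (0:ℝ)..(σ₁ ω), Real.exp (-(∫ u in (0:ℝ)..s, r (X u ω))) * f (X s ω))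
              + Real.exp (-(∫ u in (0:ℝ)..(σ₁ ω), r (X u ω))) * w (X (σ₁ ω) ω))
    (hZ0 : ∀ᵐ ω ∂P,
      (∫ s in (0:ℝ)..(0:ℝ), Real.exp (-(∫ u in (0:ℝ)..s, r (X u ω))) * f (X s ω))
        + Real.exp (-(∫ u in (0:ℝ)..(0:ℝ), r (X u ω))) * w (X 0 ω) = w₀)
    -- (ii) assumption (E1)
    (d γr : ℝ) (hd : d < 0)
    (hγ : ∀ τ : Ω → ℝ≥0∞,
      (∀ t : ℝ, MeasurableSet[𝓕 t] {ω | τ ω ≤ ENNReal.ofReal t}) →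
      ∀ T : ℝ, 0 ≤ T →
      ∫ ω, (∫ s in (0:ℝ)..((min (τ ω) (ENNReal.ofReal T)).toReal),
        Real.exp (-(∫ u in (0:ℝ)..s, r (X u ω))) * (f (X s ω) - d)) ∂P ≤ γr)
    -- (iii) a nondecreasing sequence of bounded 1/m-optimal stopping times
    (σm : ℕ → Ω → ℝ) (hσmst : ∀ m, IsStoppingTime 𝓕 (fun ω => (σm m ω : WithTop ℝ)))
    (hσm0 : ∀ m ω, 0 ≤ σm m ω) (hσmb : ∀ m, ∃ T, ∀ ω, σm m ω ≤ T)
    (hσmmono : ∀ ω, Monotone fun m => σm m ω)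
    (hσmopt : ∀ m : ℕ, 1 ≤ m →
      w₀ - 1 / (m : ℝ) ≤ discStopValue P X r f g (fun ω => ENNReal.ofReal (σm m ω)))
    -- (iv) the hitting times τ_ε are stopping times at which g is within ε of w
    (hhitst : ∀ ε : ℝ, 0 < ε →
      ∀ t : ℝ, MeasurableSet[𝓕 t] {ω | hitTime X g w ε ω ≤ ENNReal.ofReal t})
    (hhitval : ∀ ε : ℝ, 0 < ε → ∀ᵐ ω ∂P, hitTime X g w ε ω < ⊤ →
      w (X ((hitTime X g w ε ω).toReal) ω) - ε ≤ g (X ((hitTime X g w ε ω).toReal) ω)) :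
    ∀ ε : ℝ, 0 < ε → w₀ - ε ≤ discStopValue P X r f g (hitTime X g w ε) := by
  intro ε hε
  have hXm : Measurable (Function.uncurry X) := joint_meas 𝓕 X hX
  obtain ⟨ω₀⟩ : Nonempty Ω := nonempty_of_isProbabilityMeasure P
  have hCf : 0 ≤ Cf := (abs_nonneg _).trans (hfb (X 0 ω₀))
  have hCg : 0 ≤ Cg := (abs_nonneg _).trans (hgb (X 0 ω₀))
  have hfm := hfc.measurable
  have hgm := hgc.measurable
  have hwm : Measurable w := hwlsc.measurable
  have hDm := aDsc_meas hXm hr hrb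
  have hRm := aRun_meas hXm hr hrb hfm hfb
  set Z : ℝ → Ω → ℝ := fun t ω => aRun X r f t ω + aDsc X r t ω * w (X t ω) with hZ
  set Q : ℝ → Ω → ℝ := fun t ω => aRun X r f t ω + aDsc X r t ω * g (X t ω) with hQ
  have hZm : Measurable (Function.uncurry Z) := hRm.add (hDm.mul (hwm.comp hXm))
  have hQm : Measurable (Function.uncurry Q) := hRm.add (hDm.mul (hgm.comp hXm))
  have hZi : ∀ t, 0 ≤ t → Integrable (Z t) P := hZint
  have hQabs : ∀ t ω T, 0 ≤ t → t ≤ T → |Q t ω| ≤ Cf * T + Cg := by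
    intro t ω T ht hT
    have h1 := aRun_abs_le hXm hr hrb hfb ω ht
    have h2 := aRun_one_le hXm hr hrb hr0 ω ht
    have h3 := aDsc_le_one hXm hr hrb hr0 ω ht
    have h4 := aDsc_pos (X := X) (r := r) t ω
    refine (abs_add_le _ _).trans ?_
    rw [abs_mul, abs_of_pos h4]
    have h5 := mul_le_mul h3 (hgb (X t ω)) (abs_nonneg _) zero_le_one
    have h6 := mul_le_mul_of_nonneg_left (h2.trans hT) hCf
    linarith
  have hQZ : ∀ t ω, Q t ω ≤ Z t ω := fun t ω => by
    have := mul_le_mul_of_nonneg_left (hgw (X t ω)) (aDsc_pos (X := X) (r := r) t ω).le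
    simp only [hZ, hQ]; linarith
  have hsup2 : ∀ σ₁ σ₂ : Ω → ℝ, IsStoppingTime 𝓕 (fun ω => (σ₁ ω : WithTop ℝ)) →
      IsStoppingTime 𝓕 (fun ω => (σ₂ ω : WithTop ℝ)) → (∀ ω, 0 ≤ σ₁ ω) →
      (∀ ω, σ₁ ω ≤ σ₂ ω) → (∃ T, ∀ ω, σ₂ ω ≤ T) → Integrable (fun ω => Z (σ₁ ω) ω) P →
      ∫ ω, Z (σ₂ ω) ω ∂P ≤ ∫ ω, Z (σ₁ ω) ω ∂P := by
    intro σ₁ σ₂ h1 h2 h3 h4 h5 h6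
    have h7 : ∀ᵐ ω ∂P, (P[(fun ω' => Z (σ₂ ω') ω') | h1.measurableSpace]) ω ≤ Z (σ₁ ω) ω :=
      hZsup σ₁ σ₂ h1 h2 h3 h4 h5
    rw [← integral_condExp h1.measurableSpace_le]
    exact integral_mono_ae integrable_condExp h6 h7
  have hZ0' : ∫ ω, Z 0 ω ∂P = w₀ := by
    have : ∀ᵐ ω ∂P, Z 0 ω = w₀ := hZ0
    rw [integral_congr_ae this]; simp
  have hsup0 : ∀ σ : Ω → ℝ, IsStoppingTime 𝓕 (fun ω => (σ ω : WithTop ℝ)) → (∀ ω, 0 ≤ σ ω) →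
      (∃ T, ∀ ω, σ ω ≤ T) → ∫ ω, Z (σ ω) ω ∂P ≤ w₀ := by
    intro σ h1 h2 h3
    rw [← hZ0']
    exact hsup2 (fun _ => 0) σ (isStoppingTime_const 𝓕 (0:ℝ)) h1 (fun _ => le_rfl) h2 h3
      (hZi 0 le_rfl)
  have hlsc : ∀ ω t, 0 ≤ t → ∀ y < Z t ω, ∀ᶠ s in 𝓝[≥] t, y < Z s ω := by
    intro ω t ht y hy
    have hDc : Tendsto (fun s => aDsc X r s ω) (𝓝[≥] t) (𝓝 (aDsc X r t ω)) :=
      ((aDsc_cont hXm hr hrb ω).tendsto t).mono_left nhdsWithin_le_nhds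
    have hRc : Tendsto (fun s => aRun X r f s ω) (𝓝[≥] t) (𝓝 (aRun X r f t ω)) :=
      ((aRun_cont hXm hr hrb hfm hfb ω).tendsto t).mono_left nhdsWithin_le_nhds
    have hpos := aDsc_pos (X := X) (r := r) t ω
    have hq := (tendsto_const_nhds (x := y)).sub hRc |>.div hDc hpos.ne'
    have hlt : (y - aRun X r f t ω) / aDsc X r t ω < w (X t ω) := by
      rw [div_lt_iff₀ hpos]
      simp only [hZ] at hy
      linarith
    obtain ⟨c, hc1, hc2⟩ := exists_between hlt
    have hwev : ∀ᶠ s in 𝓝[≥] t, c < w (X s ω) :=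
      (hrc ω t ht).eventually (hwlsc (X t ω) c hc2)
    filter_upwards [hq.eventually_lt_const hc1, hwev] with s h1 h2
    have h3 := h1.trans h2
    simp only [Pi.div_apply] at h3
    rw [div_lt_iff₀ (aDsc_pos s ω)] at h3
    simp only [hZ]
    linarith
  have hZσ : ∀ σ : Ω → ℝ, IsStoppingTime 𝓕 (fun ω => (σ ω : WithTop ℝ)) → (∀ ω, 0 ≤ σ ω) →
      (∃ T, ∀ ω, σ ω ≤ T) → Integrable (fun ω => Z (σ ω) ω) P := by
    rintro σ h1 h2 ⟨T, h3⟩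
    refine samp_int P 𝓕 Z hZm hZi w₀ (fun T => ⟨Cf * T + Cg, fun t ω ht hT => ?_⟩) hlsc
      (fun σ h1 h2 h3 _ => hsup0 σ h1 h2 h3) σ h1 h2 T h3
    exact (abs_le.1 (hQabs t ω T ht hT)).1.trans (hQZ t ω)
  -- the hitting time
  set τ : Ω → ℝ≥0∞ := hitTime X g w ε with hτdef
  have hτst := hhitst ε hε
  have hτval := hhitval ε hε
  have hτm : Measurable τ := by
    refine measurable_of_Iic fun a => ?_
    by_cases ha : a = ⊤
    · simp [ha]
    · have := 𝓕.le _ _ (hτst a.toReal)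
      rw [ENNReal.ofReal_toReal ha] at this
      exact this
  have hτlt : ∀ ω t, 0 ≤ t → ENNReal.ofReal t < τ ω → g (X t ω) < w (X t ω) - ε := by
    intro ω t ht h
    by_contra hcon
    push Not at hcon
    exact absurd (sInf_le (Set.mem_image_of_mem ENNReal.ofReal (show t ∈ {t : ℝ | 0 ≤ t ∧ w (X t ω) - ε ≤ g (X t ω)} from ⟨ht, hcon⟩)) : τ ω ≤ _) (not_le.2 h)
  set s : ℕ → Ω → ℝ := fun m => σm (m + 1) with hs
  have hsst : ∀ m, IsStoppingTime 𝓕 (fun ω => (s m ω : WithTop ℝ)) := fun m => hσmst (m + 1)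
  have hs0 : ∀ m ω, 0 ≤ s m ω := fun m => hσm0 (m + 1)
  have hsb : ∀ m, ∃ T, ∀ ω, s m ω ≤ T := fun m => hσmb (m + 1)
  have hsmeas : ∀ m, Measurable (s m) := fun m => stop_meas 𝓕 _ (hsst m)
  have hsmono : ∀ ω, Monotone fun m => s m ω := fun ω a b hab =>
    hσmmono ω (Nat.succ_le_succ hab)
  set ρ : ℕ → Ω → ℝ := fun m ω => (min (τ ω) (ENNReal.ofReal (s m ω))).toReal with hρ
  have hρ0 : ∀ m ω, 0 ≤ ρ m ω := fun m ω => ENNReal.toReal_nonneg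
  have hρs : ∀ m ω, ρ m ω ≤ s m ω := fun m ω => by
    have := ENNReal.toReal_mono ENNReal.ofReal_ne_top
      (min_le_right (τ ω) (ENNReal.ofReal (s m ω)))
    rwa [ENNReal.toReal_ofReal (hs0 m ω)] at this
  have hρset : ∀ m (t : ℝ), 0 ≤ t →
      MeasurableSet[𝓕 t] {ω | min (τ ω) (ENNReal.ofReal (s m ω)) ≤ ENNReal.ofReal t} := by
    intro m t ht
    have h1 := hsst m t
    simp only [WithTop.coe_le_coe] at h1
    have h2 := @MeasurableSet.union _ (𝓕 t) _ _ (hτst t) h1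
    convert h2 using 1
    ext ω
    simp only [Set.mem_ofPred_eq, Set.mem_union, min_le_iff, ENNReal.ofReal_le_ofReal_iff ht, hτdef]
  have hρst : ∀ m, IsStoppingTime 𝓕 (fun ω => (ρ m ω : WithTop ℝ)) := by
    intro m t
    simp only [WithTop.coe_le_coe]
    by_cases ht : 0 ≤ t
    · convert hρset m t ht using 1
      ext ω
      simp only [Set.mem_ofPred_eq, hρ]
      rw [ENNReal.le_ofReal_iff_toReal_le (by simp) ht]
    · convert @MeasurableSet.empty _ (𝓕 t) using 1
      ext ω
      simp only [Set.mem_ofPred_eq, Set.mem_empty_iff_false, iff_false, not_le]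
      linarith [hρ0 m ω]
  have hρset' : ∀ m (t : ℝ),
      MeasurableSet[𝓕 t] {ω | min (τ ω) (ENNReal.ofReal (max (s m ω) 1)) ≤ ENNReal.ofReal t} := by
    intro m t
    by_cases ht : 1 ≤ t
    · convert hρset m t (by linarith) using 1
      ext ω
      simp only [Set.mem_ofPred_eq, min_le_iff,
        ENNReal.ofReal_le_ofReal_iff (show (0:ℝ) ≤ t by linarith), max_le_iff, ht, and_true]
    · convert hτst t using 1
      ext ω
      simp only [Set.mem_ofPred_eq, min_le_iff, ← hτdef]
      refine or_iff_left ?_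
      rw [not_le, ENNReal.ofReal_lt_ofReal_iff (lt_of_lt_of_le one_pos (le_max_right _ _))]
      exact (not_le.1 ht).trans_le (le_max_right _ _)
  have hρb : ∀ m, ∃ T, ∀ ω, ρ m ω ≤ T := fun m => by
    obtain ⟨T, hT⟩ := hsb m
    exact ⟨T, fun ω => (hρs m ω).trans (hT ω)⟩
  have hρmeas : ∀ m, Measurable (ρ m) := fun m => stop_meas 𝓕 _ (hρst m)
  have hbint : ∀ σ : Ω → ℝ, Measurable σ → (∀ ω, 0 ≤ σ ω) → (∃ T, ∀ ω, σ ω ≤ T) →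
      Integrable (fun ω => Q (σ ω) ω) P := by
    rintro σ h1 h2 ⟨T, h3⟩
    refine Integrable.of_bound (samp_meas hQm h1).aestronglyMeasurable (Cf * T + Cg)
      (Eventually.of_forall fun ω => ?_)
    exact hQabs _ _ _ (h2 ω) (h3 ω)
  -- near optimality of s m
  have hopt : ∀ m : ℕ, w₀ - 1 / ((m:ℝ) + 1) ≤ ∫ ω, Q (s m ω) ω ∂P := by
    intro m
    have h1 := hσmopt (m + 1) (by omega)
    push_cast at h1
    refine h1.trans (le_of_eq ?_)
    obtain ⟨T, hT⟩ := hsb m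
    refine Tendsto.limsup_eq (tendsto_const_nhds.congr' ?_)
    filter_upwards [eventually_ge_atTop T] with T' hT'
    have h2 : ∀ ω, (min (ENNReal.ofReal (σm (m + 1) ω)) (ENNReal.ofReal T')).toReal = s m ω := by
      intro ω
      rw [min_eq_left (ENNReal.ofReal_le_ofReal ((hT ω).trans hT')),
        ENNReal.toReal_ofReal (hs0 m ω)]
    simp only [discTruncPayoff, h2]
    rfl
  have hgap : ∀ m, Integrable (fun ω => Z (s m ω) ω - Q (s m ω) ω) P := fun m =>
    (hZσ _ (hsst m) (hs0 m) (hsb m)).sub (hbint _ (hsmeas m) (hs0 m) (hsb m))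
  have hgapI : ∀ m, ∫ ω, (Z (s m ω) ω - Q (s m ω) ω) ∂P =
      ∫ ω, Z (s m ω) ω ∂P - ∫ ω, Q (s m ω) ω ∂P := fun m =>
    integral_sub (hZσ _ (hsst m) (hs0 m) (hsb m)) (hbint _ (hsmeas m) (hs0 m) (hsb m))
  have hgaple : ∀ m : ℕ, ∫ ω, (Z (s m ω) ω - Q (s m ω) ω) ∂P ≤ 1 / ((m:ℝ) + 1) := fun m => by
    rw [hgapI m]
    linarith [hsup0 _ (hsst m) (hs0 m) (hsb m), hopt m]
  have hρopt : ∀ m : ℕ, w₀ - ε - 1 / ((m:ℝ) + 1) ≤ ∫ ω, Q (ρ m ω) ω ∂P := by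
    intro m
    have hZρ := hZσ _ (hρst m) (hρ0 m) (hρb m)
    have hQρ := hbint _ (hρmeas m) (hρ0 m) (hρb m)
    have hpt : ∀ᵐ ω ∂P, Z (ρ m ω) ω ≤ Q (ρ m ω) ω + ε + (Z (s m ω) ω - Q (s m ω) ω) := by
      filter_upwards [hτval] with ω hω
      by_cases h : τ ω ≤ ENNReal.ofReal (s m ω)
      · have hlt : τ ω < ⊤ := h.trans_lt ENNReal.ofReal_lt_top
        have h1 : ρ m ω = (τ ω).toReal := by simp only [hρ]; rw [min_eq_left h]
        have h2 := hω hlt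
        rw [← h1] at h2
        have h3 := hQZ (s m ω) ω
        have h4 := aDsc_pos (X := X) (r := r) (ρ m ω) ω
        have h5 := aDsc_le_one hXm hr hrb hr0 ω (hρ0 m ω)
        have h6 : Z (ρ m ω) ω ≤ Q (ρ m ω) ω + ε := by
          simp only [hZ, hQ]
          nlinarith
        linarith
      · push Not at h
        have h1 : ρ m ω = s m ω := by
          simp only [hρ]; rw [min_eq_right h.le, ENNReal.toReal_ofReal (hs0 m ω)]
        rw [h1]
        linarith
    have h1 := integral_mono_ae hZρ ((hQρ.add (integrable_const ε)).add (hgap m)) hpt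
    have h2 := hsup2 _ _ (hρst m) (hsst m) (hρ0 m) (hρs m) (hsb m) hZρ
    have h3 : ∫ ω, (Q (ρ m ω) ω + ε + (Z (s m ω) ω - Q (s m ω) ω)) ∂P =
        ∫ ω, Q (ρ m ω) ω ∂P + ε + (∫ ω, Z (s m ω) ω ∂P - ∫ ω, Q (s m ω) ω ∂P) := by
      rw [integral_add (f := fun ω => Q (ρ m ω) ω + ε) (hQρ.add (integrable_const ε)) (hgap m),
        integral_add hQρ (integrable_const ε), hgapI m]
      simp
    have h4 := hopt m
    have h5 : ∫ ω, Z (ρ m ω) ω ∂P ≤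
        ∫ ω, (Q (ρ m ω) ω + ε + (Z (s m ω) ω - Q (s m ω) ω)) ∂P := h1
    linarith
  -- discount vanishes
  have hY : ∀ᵐ ω ∂P, (∀ m, ENNReal.ofReal (s m ω) < τ ω) →
      Tendsto (fun m => aDsc X r (s m ω) ω) atTop (𝓝 0) := by
    set Y : ℕ → Ω → ℝ := fun m ω =>
      if ENNReal.ofReal (s m ω) < τ ω then aDsc X r (s m ω) ω else 0 with hYdef
    have hY0 : ∀ m ω, 0 ≤ Y m ω := fun m ω => by
      simp only [hYdef]; split_ifs
      · exact (aDsc_pos _ ω).le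
      · exact le_rfl
    have hY1 : ∀ m ω, Y m ω ≤ 1 := fun m ω => by
      simp only [hYdef]; split_ifs
      · exact aDsc_le_one hXm hr hrb hr0 ω (hs0 m ω)
      · exact zero_le_one
    have hYm : ∀ m, Measurable (Y m) := fun m =>
      Measurable.ite (measurableSet_lt (hsmeas m).ennreal_ofReal hτm)
        (samp_meas hDm (hsmeas m)) measurable_const
    have hYanti : ∀ ω, Antitone fun m => Y m ω := by
      intro ω a b hab
      by_cases h : ENNReal.ofReal (s b ω) < τ ω
      · have h' := (ENNReal.ofReal_le_ofReal (hsmono ω hab)).trans_lt h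
        simp only [hYdef, if_pos h, if_pos h']
        exact aDsc_anti hXm hr hrb hr0 ω (hsmono ω hab)
      · have : Y b ω = 0 := by simp only [hYdef, if_neg h]
        simp only [this]
        exact hY0 a ω
    have hYb : ∀ ω, BddBelow (Set.range fun m => Y m ω) := fun ω =>
      ⟨0, by rintro _ ⟨m, rfl⟩; exact hY0 m ω⟩
    have hYgap : ∀ m ω, ε * Y m ω ≤ Z (s m ω) ω - Q (s m ω) ω := by
      intro m ω
      by_cases h : ENNReal.ofReal (s m ω) < τ ω
      · have h1 := hτlt ω _ (hs0 m ω) h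
        have h2 := aDsc_pos (X := X) (r := r) (s m ω) ω
        simp only [hYdef, if_pos h, hZ, hQ]
        nlinarith
      · simp only [hYdef, if_neg h]
        linarith [hQZ (s m ω) ω]
    set W : Ω → ℝ := fun ω => ⨅ m, Y m ω with hW
    have hWm : Measurable W := Measurable.iInf hYm
    have hW0 : ∀ ω, 0 ≤ W ω := fun ω => le_ciInf fun m => hY0 m ω
    have hWle : ∀ m ω, W ω ≤ Y m ω := fun m ω => ciInf_le (hYb ω) m
    have hWi : Integrable W P := Integrable.of_bound hWm.aestronglyMeasurable 1
      (Eventually.of_forall fun ω => by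
        rw [Real.norm_eq_abs, abs_of_nonneg (hW0 ω)]
        exact (hWle 0 ω).trans (hY1 0 ω))
    have hWint : ∀ m : ℕ, ε * ∫ ω, W ω ∂P ≤ 1 / ((m:ℝ) + 1) := fun m => by
      rw [← integral_const_mul]
      refine le_trans (integral_mono (hWi.const_mul ε) (hgap m) fun ω => ?_) (hgaple m)
      exact (mul_le_mul_of_nonneg_left (hWle m ω) hε.le).trans (hYgap m ω)
    have h1 : ε * ∫ ω, W ω ∂P ≤ 0 :=
      ge_of_tendsto' tendsto_one_div_add_atTop_nhds_zero_nat hWint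
    have h2 : ∫ ω, W ω ∂P = 0 := by
      have h3 : 0 ≤ ∫ ω, W ω ∂P := integral_nonneg hW0
      nlinarith
    have h3 := (integral_eq_zero_iff_of_nonneg hW0 hWi).1 h2
    filter_upwards [h3] with ω hω hall
    have h4 := tendsto_atTop_ciInf (hYanti ω) (hYb ω)
    have h5 : (⨅ m, Y m ω) = 0 := hω
    rw [h5] at h4
    refine h4.congr fun m => ?_
    simp only [hYdef, if_pos (hall m)]
  -- bound on expected discounted time
  have hJm : Measurable (Function.uncurry (aRun X r (fun _ => 1))) :=
    aRun_meas (Cf := 1) hXm hr hrb measurable_const (by simp)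
  have hJ0 : ∀ ω t, 0 ≤ t → 0 ≤ aRun X r (fun _ => 1) t ω := fun ω t ht =>
    (aRun_zero (X := X) (r := r) (f := fun _ => 1) ω).symm.le.trans
      (aRun_one_mono hXm hr hrb ω ht)
  have hJi : ∀ m, Integrable (fun ω => aRun X r (fun _ => 1) (ρ m ω) ω) P := fun m => by
    obtain ⟨T, hT⟩ := hρb m
    refine Integrable.of_bound (samp_meas hJm (hρmeas m)).aestronglyMeasurable T
      (Eventually.of_forall fun ω => ?_)
    rw [Real.norm_eq_abs, abs_of_nonneg (hJ0 ω _ (hρ0 m ω))]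
    exact (aRun_one_le hXm hr hrb hr0 ω (hρ0 m ω)).trans (hT ω)
  have hJ : ∀ m, ∫ ω, aRun X r (fun _ => 1) (ρ m ω) ω ∂P ≤ (γr + (Cf + |d|) + Cg + ε + 1 - w₀) / (-d) := by
    intro m
    obtain ⟨T, hT⟩ := hρb m
    obtain ⟨S, hS⟩ := hsb m
    have h1 := hγ (fun ω => min (τ ω) (ENNReal.ofReal (max (s m ω) 1))) (hρset' m) (max S 1)
      (zero_le_one.trans (le_max_right _ _))
    have h2 : ∀ ω, (min (min (τ ω) (ENNReal.ofReal (max (s m ω) 1)))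
        (ENNReal.ofReal (max S 1))).toReal
        = (min (τ ω) (ENNReal.ofReal (max (s m ω) 1))).toReal := by
      intro ω
      rw [min_eq_left]
      exact (min_le_right _ _).trans (ENNReal.ofReal_le_ofReal (max_le_max (hS ω) le_rfl))
    simp only [h2] at h1
    set ρ' : Ω → ℝ := fun ω => (min (τ ω) (ENNReal.ofReal (max (s m ω) 1))).toReal with hρ'
    have hfd : ∀ x, |f x - d| ≤ Cf + |d| := fun x => (abs_sub _ _).trans (by linarith [hfb x])
    have hfdm : Measurable fun x => f x - d := hfm.sub_const d
    have hρ'm : Measurable ρ' :=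
      (hτm.min ((hsmeas m).max measurable_const).ennreal_ofReal).ennreal_toReal
    have hρ'0 : ∀ ω, 0 ≤ ρ' ω := fun ω => ENNReal.toReal_nonneg
    have hρ'S : ∀ ω, ρ' ω ≤ max S 1 := fun ω =>
      ENNReal.toReal_le_of_le_ofReal (zero_le_one.trans (le_max_right _ _))
        ((min_le_right _ _).trans (ENNReal.ofReal_le_ofReal (max_le_max (hS ω) le_rfl)))
    have hρρ' : ∀ ω, ρ m ω ≤ ρ' ω := fun ω => ENNReal.toReal_mono (by simp)
      (min_le_min le_rfl (ENNReal.ofReal_le_ofReal (le_max_left _ _)))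
    have hρ'ρ : ∀ ω, ρ' ω ≤ ρ m ω + 1 := fun ω => by
      rcases le_total (s m ω) 1 with h | h
      · have : ρ' ω ≤ 1 := ENNReal.toReal_le_of_le_ofReal zero_le_one
          ((min_le_right _ _).trans (by rw [max_eq_right h]))
        linarith [hρ0 m ω]
      · have : ρ' ω = ρ m ω := by simp only [hρ', hρ]; rw [max_eq_left h]
        linarith
    have hR'i : Integrable (fun ω => aRun X r (fun x => f x - d) (ρ' ω) ω) P := by
      refine Integrable.of_bound (samp_meas (aRun_meas hXm hr hrb hfdm hfd)
        hρ'm).aestronglyMeasurable ((Cf + |d|) * max S 1) (Eventually.of_forall fun ω => ?_)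
      refine (aRun_abs_le hXm hr hrb hfd ω (hρ'0 ω)).trans ?_
      exact mul_le_mul_of_nonneg_left
        ((aRun_one_le hXm hr hrb hr0 ω (hρ'0 ω)).trans (hρ'S ω)) (by positivity)
    have h1' : ∫ ω, aRun X r (fun x => f x - d) (ρ' ω) ω ∂P ≤ γr := h1
    have hDgi : Integrable (fun ω => aDsc X r (ρ m ω) ω * g (X (ρ m ω) ω)) P := by
      refine Integrable.of_bound (samp_meas (Z := fun t ω => aDsc X r t ω * g (X t ω))
        (hDm.mul (hgm.comp hXm)) (hρmeas m)).aestronglyMeasurable Cg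
        (Eventually.of_forall fun ω => ?_)
      rw [Real.norm_eq_abs, abs_mul, abs_of_pos (aDsc_pos _ ω)]
      have := mul_le_mul (aDsc_le_one hXm hr hrb hr0 ω (hρ0 m ω)) (hgb (X (ρ m ω) ω))
        (abs_nonneg _) zero_le_one
      linarith
    have hQρ := hbint _ (hρmeas m) (hρ0 m) (hρb m)
    have hle : ∀ ω, Q (ρ m ω) ω - Cg - d * aRun X r (fun _ => 1) (ρ m ω) ω ≤
        aRun X r (fun x => f x - d) (ρ m ω) ω := by
      intro ω
      rw [aRun_sub hXm hr hrb hfm hfb]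
      have h4 : aDsc X r (ρ m ω) ω * g (X (ρ m ω) ω) ≤ Cg := by
        have h5 := mul_le_mul (aDsc_le_one hXm hr hrb hr0 ω (hρ0 m ω)) (hgb (X (ρ m ω) ω))
          (abs_nonneg _) zero_le_one
        have h6 := mul_le_mul_of_nonneg_left (le_abs_self (g (X (ρ m ω) ω)))
          (aDsc_pos (X := X) (r := r) (ρ m ω) ω).le
        linarith
      simp only [hQ]
      linarith
    have hRdi : Integrable (fun ω => aRun X r (fun x => f x - d) (ρ m ω) ω) P := by
      have := (hQρ.sub hDgi).sub ((hJi m).const_mul d)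
      refine this.congr (Eventually.of_forall fun ω => ?_)
      simp only [Pi.sub_apply, hQ]
      rw [aRun_sub hXm hr hrb hfm hfb]
      ring
    have h3 : ∫ ω, aRun X r (fun x => f x - d) (ρ m ω) ω ∂P ≤ γr + (Cf + |d|) := by
      have h5 := integral_mono hRdi (hR'i.add (integrable_const (Cf + |d|))) fun ω =>
        aRun_diff hXm hr hrb hr0 hfdm hfd ω (hρ0 m ω) (hρρ' ω) (hρ'ρ ω)
      have h6 := integral_add hR'i (integrable_const (μ := P) (Cf + |d|))
      have h7 : ∫ _ω, (Cf + |d|) ∂P = Cf + |d| := by simp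
      rw [h7] at h6
      exact h5.trans (h6.le.trans (by linarith))
    have h4 := integral_mono ((hQρ.sub (integrable_const Cg)).sub ((hJi m).const_mul d)) hRdi hle
    have h5 : ∫ ω, (Q (ρ m ω) ω - Cg - d * aRun X r (fun _ => 1) (ρ m ω) ω) ∂P =
        ∫ ω, Q (ρ m ω) ω ∂P - Cg - d * ∫ ω, aRun X r (fun _ => 1) (ρ m ω) ω ∂P := by
      rw [integral_sub (f := fun ω => Q (ρ m ω) ω - Cg) (hQρ.sub (integrable_const Cg)) ((hJi m).const_mul d),
        integral_sub hQρ (integrable_const Cg), integral_const_mul]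
      simp
    have h6 : ∫ ω, (Q (ρ m ω) ω - Cg - d * aRun X r (fun _ => 1) (ρ m ω) ω) ∂P ≤
        ∫ ω, aRun X r (fun x => f x - d) (ρ m ω) ω ∂P := h4
    have h7 := hρopt m
    have h8 : 1 / ((m:ℝ) + 1) ≤ 1 := by
      rw [div_le_one (by positivity)]; linarith [(Nat.cast_nonneg m : (0:ℝ) ≤ m)]
    rw [le_div_iff₀ (by linarith)]
    linarith
  obtain ⟨L, hL1, hL2⟩ := conv_part P hXm hr hrb hr0 hfm hfb hgm hgb hCf τ hτm s hsmeas hs0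
    hsmono hY _ hJi hJ
  have hlim : w₀ - ε ≤ L := by
    have h1 : Tendsto (fun m : ℕ => w₀ - ε - 1 / ((m:ℝ) + 1)) atTop (𝓝 (w₀ - ε - 0)) :=
      tendsto_const_nhds.sub tendsto_one_div_add_atTop_nhds_zero_nat
    rw [sub_zero] at h1
    exact le_of_tendsto_of_tendsto' h1 hL1 hρopt
  have : discStopValue P X r f g τ = L := Tendsto.limsup_eq hL2
  rw [this]
  exact hlim
end
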